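/- Let P = {P_n : n < ω} be a partition of ω into infinitely many infinite sets with min P_i < min P_j whenever i < j, and let I = (I_n)_{n<ω} be a sequence of subsets of ω with n ∈ I_n for all n. Then a subset 𝓧 ⊆ 𝓔^{P,I}_∞ has the property of Baire with respect to the Ellentuck topology if and only if 𝓧 is Ramsey; moreover, 𝓧 is Ellentuck-meagre if and only if 𝓧 is Ramsey null. (That is, (𝓔^{P,I}_∞, ≤, r) is a topological Ramsey space.) -/

import Mathlib

open Set

namespace DualRamsey

/-- `F` is a coarsening of `E` (written `F ≤ E` in the paper): every class of `F`
is a union of classes of `E`. -/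
def Coarsens {X : Type*} (F E : Setoid X) : Prop := ∀ a b, E.r a b → F.r a b

/-- The set of equivalence classes of a setoid. -/
def classes {X : Type*} (E : Setoid X) : Set (Set X) := {C | ∃ x, C = {y | E.r x y}}

/-- The set of minimal representatives of the classes of an equivalence relation on ℕ. -/
def minReps (E : Setoid ℕ) : Set ℕ := {n | ∀ m, E.r n m → n ≤ m}

/-- `pRep E k` is `p_k(E)`, the k-th minimal representative in increasing order. -/
noncomputable def pRep (E : Setoid ℕ) (k : ℕ) : ℕ := Nat.nth (· ∈ minReps E) k

/-- `approx n E` is the n-th approximation `r_n(E)`: `E` restricted to `{0,…,p_n(E)-1}`,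
identified with its graph. -/
noncomputable def approx (n : ℕ) (E : Setoid ℕ) : Set (ℕ × ℕ) :=
  {q | q.1 < pRep E n ∧ q.2 < pRep E n ∧ E.r q.1 q.2}

/-- Basic set `[a, E]` relative to a space `S` of equivalence relations. -/
noncomputable def basicSet (S : Set (Setoid ℕ)) (a : Set (ℕ × ℕ)) (E : ↥S) : Set ↥S :=
  {F | Coarsens F.1 E.1 ∧ ∃ n, approx n F.1 = a}

/-- The Ellentuck topology on a space `S` of equivalence relations. -/
noncomputable def ellentuckTop (S : Set (Setoid ℕ)) : TopologicalSpace ↥S :=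
  TopologicalSpace.generateFrom {U | ∃ a E, U = basicSet S a E}

def IsRamsey (S : Set (Setoid ℕ)) (X : Set ↥S) : Prop :=
  ∀ (a : Set (ℕ × ℕ)) (B : ↥S), (basicSet S a B).Nonempty →
    ∃ A ∈ basicSet S a B, basicSet S a A ⊆ X ∨ basicSet S a A ∩ X = ∅

def IsRamseyNull (S : Set (Setoid ℕ)) (X : Set ↥S) : Prop :=
  ∀ (a : Set (ℕ × ℕ)) (B : ↥S), (basicSet S a B).Nonempty →
    ∃ A ∈ basicSet S a B, basicSet S a A ∩ X = ∅

/-- The property of Baire with respect to the Ellentuck topology. -/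
noncomputable def HasBP (S : Set (Setoid ℕ)) (X : Set ↥S) : Prop :=
  ∃ O M : Set ↥S, (ellentuckTop S).IsOpen O ∧ @IsMeagre _ (ellentuckTop S) M ∧
    X = (O \ M) ∪ (M \ O)

/-- The Souslin operation applied to a scheme indexed by finite sequences of naturals. -/
def souslinOp {X : Type*} (A : List ℕ → Set X) : Set X :=
  ⋃ x : ℕ → ℕ, ⋂ n : ℕ, A ((List.range n).map x)

/-- `Y` belongs to the smallest field of sets containing all `t`-open sets and
closed under the Souslin operation. -/
def SouslinMeasurable {X : Type*} (t : TopologicalSpace X) (Y : Set X) : Prop :=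
  ∀ 𝒜 : Set (Set X),
    (∀ U, t.IsOpen U → U ∈ 𝒜) →
    (∀ A ∈ 𝒜, Aᶜ ∈ 𝒜) →
    (∀ A ∈ 𝒜, ∀ B ∈ 𝒜, A ∪ B ∈ 𝒜) →
    (∀ f : List ℕ → Set X, (∀ s, f s ∈ 𝒜) → souslinOp f ∈ 𝒜) →
    Y ∈ 𝒜

/-- The graph of an equivalence relation as a boolean-valued function. -/
noncomputable def graphMap {X : Type*} (E : Setoid X) : X × X → Bool :=
  fun q => @decide (E.r q.1 q.2) (Classical.dec _)

/-- The metrizable topology on a space of equivalence relations, as a subspace of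
`2^(X × X)` via graphs. -/
noncomputable def graphTop {X : Type*} (S : Set (Setoid X)) : TopologicalSpace ↥S :=
  TopologicalSpace.induced (fun E => graphMap E.1) inferInstance



/-- `σ(k)`: the largest `n` such that `2^n` divides `k+1`. -/
def sigmaSeq (k : ℕ) : ℕ := padicValNat 2 (k + 1)

/-- `𝓔^P_∞` for a partition `P` of ℕ into infinitely many infinite pieces: the
`P`-alternating equivalence relations, i.e. those with infinitely many classes whose
`k`-th minimal representative lies in `P (σ k)`. -/
noncomputable def EPaltInf (P : ℕ → Set ℕ) : Set (Setoid ℕ) :=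
  {E | (classes E).Infinite ∧ ∀ k : ℕ, pRep E k ∈ P (sigmaSeq k)}

/-- `𝓔^{P,I}_∞`: the `P`-alternating equivalence relations such that moreover every
class whose minimum lies in `P n` is contained in `⋃ {P m : m ∈ I n}`. -/
noncomputable def EPaltI (P : ℕ → Set ℕ) (I : ℕ → Set ℕ) : Set (Setoid ℕ) :=
  {E | E ∈ EPaltInf P ∧
    ∀ x ∈ minReps E, ∀ n, x ∈ P n → ∀ y, E.r x y → ∃ m ∈ I n, y ∈ P m}

namespace PC

variable {Λ : Type}

/-- Block subspaces. -/
structure Vs (t : ℕ → ℕ) (Al : ℕ → Finset Λ) (h : ℕ → Λ ⊕ ℕ) : Prop where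
  cst : ∀ j c, h j = Sum.inl c → c ∈ Al j
  var : ∀ j i, h j = Sum.inr i → i ≤ j ∧ h i = Sum.inr i ∧ t j = t i ∧ Al j = Al i ∧
    ∀ k, i < k → k ≤ j → h k ≠ Sum.inr k
  inf : ∀ m N, ∃ j, N ≤ j ∧ h j = Sum.inr j ∧ t j = m

def Wd (Al : ℕ → Finset Λ) (h : ℕ → Λ ⊕ ℕ) (w : ℕ → Λ) : Prop :=
  (∀ j, w j ∈ Al j) ∧ (∀ j c, h j = Sum.inl c → w j = c) ∧ ∀ j i, h j = Sum.inr i → w j = w i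

def Le (h' h : ℕ → Λ ⊕ ℕ) : Prop :=
  (∀ j c, h j = Sum.inl c → h' j = Sum.inl c) ∧ ∀ j i, h j = Sum.inr i → h' j = h' i

def ov {α : Type} (s : ℕ) (u w : ℕ → α) : ℕ → α := fun j => if j < s then u j else w j

open Classical in
noncomputable def rs (h : ℕ → Λ ⊕ ℕ) (Z : Set ℕ) (α : ℕ → Λ) : ℕ → Λ ⊕ ℕ := fun j =>
  match h j with
  | Sum.inl c => Sum.inl c
  | Sum.inr i => if i ∈ Z then Sum.inr i else Sum.inl (α i)

def sb (h : ℕ → Λ ⊕ ℕ) (α : ℕ → Λ) : ℕ → Λ := fun j =>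
  match h j with
  | Sum.inl c => c
  | Sum.inr i => α i

variable {t : ℕ → ℕ} {Al : ℕ → Finset Λ} {h h' h'' : ℕ → Λ ⊕ ℕ} {w w' : ℕ → Λ}

theorem sb_inl {j c} (α : ℕ → Λ) (e : h j = Sum.inl c) : sb h α j = c := by simp [sb, e]
theorem sb_inr {j i} (α : ℕ → Λ) (e : h j = Sum.inr i) : sb h α j = α i := by simp [sb, e]

theorem Le.refl (H : Vs t Al h) : Le h h :=
  ⟨fun _ _ e => e, fun j i e => by rw [e, (H.var j i e).2.1]⟩

theorem Le.trans (H1 : Vs t Al h') (a : Le h'' h') (b : Le h' h) : Le h'' h := by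
  refine ⟨fun j c e => a.1 _ _ (b.1 _ _ e), fun j i e => ?_⟩
  have := b.2 _ _ e
  cases e' : h' j with
  | inl c => rw [a.1 _ _ e', a.1 i c (by rw [← this, e'])]
  | inr k => rw [a.2 _ _ e', a.2 i k (by rw [← this, e'])]

theorem Wd.of_le (a : Le h' h) (H : Wd Al h' w) : Wd Al h w := by
  refine ⟨H.1, fun j c e => H.2.1 _ _ (a.1 _ _ e), fun j i e => ?_⟩
  have := a.2 _ _ e
  cases e' : h' j with
  | inl c => rw [H.2.1 _ _ e', H.2.1 i c (by rw [← this, e'])]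
  | inr k => rw [H.2.2 _ _ e', H.2.2 i k (by rw [← this, e'])]

theorem start_of_le (H : Vs t Al h) (H' : Vs t Al h') (a : Le h' h) {j} (e : h' j = Sum.inr j) :
    h j = Sum.inr j := by
  cases e1 : h j with
  | inl c => rw [a.1 _ _ e1] at e; cases e
  | inr i =>
    have h1 := H.var _ _ e1
    have h2 := a.2 _ _ e1
    rw [e] at h2
    have := (H'.var _ _ h2.symm).1
    have : i = j := by omega
    rw [this]

theorem block (H : Vs t Al h) {s j i} (es : h s = Sum.inr s) (hs : s ≤ j) (e : h j = Sum.inr i) :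
    s ≤ i := by
  by_contra hc
  exact (H.var _ _ e).2.2.2.2 s (by omega) hs es

theorem sb_Wd (H : Vs t Al h) {α : ℕ → Λ} (hα : ∀ i, α i ∈ Al i) : Wd Al h (sb h α) := by
  refine ⟨fun j => ?_, fun j c e => sb_inl _ e, fun j i e => ?_⟩
  · cases e : h j with
    | inl c => rw [sb_inl _ e]; exact H.cst _ _ e
    | inr i => rw [sb_inr _ e, (H.var _ _ e).2.2.2.1]; exact hα i
  · rw [sb_inr _ e, sb_inr _ (H.var _ _ e).2.1]

theorem ov_Wd (H : Vs t Al h) {s} (es : h s = Sum.inr s) (a : Wd Al h w) (b : Wd Al h w') :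
    Wd Al h (ov s w w') := by
  refine ⟨fun j => ?_, fun j c e => ?_, fun j i e => ?_⟩
  · unfold ov; split_ifs; exacts [a.1 j, b.1 j]
  · unfold ov; split_ifs; exacts [a.2.1 _ _ e, b.2.1 _ _ e]
  · unfold ov
    by_cases hj : j < s
    · have := (H.var _ _ e).1
      rw [if_pos hj, if_pos (by omega)]; exact a.2.2 _ _ e
    · have := block H es (by omega) e
      rw [if_neg hj, if_neg (by omega)]; exact b.2.2 _ _ e

theorem rs_Le (H : Vs t Al h) (Z : Set ℕ) (α : ℕ → Λ) : Le (rs h Z α) h := by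
  refine ⟨fun j c e => by simp [rs, e], fun j i e => ?_⟩
  simp [rs, e, (H.var _ _ e).2.1]

theorem rs_start (H : Vs t Al h) {Z : Set ℕ} {α : ℕ → Λ} {j i} :
    rs h Z α j = Sum.inr i ↔ h j = Sum.inr i ∧ i ∈ Z := by
  classical
  unfold rs
  cases e : h j with
  | inl c => simp
  | inr k =>
    simp only [Sum.inr.injEq]
    split_ifs with hk
    · constructor
      · intro h1; cases h1; exact ⟨rfl, hk⟩
      · rintro ⟨rfl, _⟩; rfl
    · constructor
      · intro h1; cases h1
      · rintro ⟨rfl, h2⟩; exact absurd h2 hk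

theorem rs_Vs (H : Vs t Al h) {Z : Set ℕ} {α : ℕ → Λ} (hα : ∀ i, α i ∈ Al i)
    (hZ : ∀ m N, ∃ j, N ≤ j ∧ h j = Sum.inr j ∧ t j = m ∧ j ∈ Z) : Vs t Al (rs h Z α) := by
  classical
  refine ⟨fun j c e => ?_, fun j i e => ?_, fun m N => ?_⟩
  · unfold rs at e
    cases e1 : h j with
    | inl c' => simp [e1] at e; subst e; exact H.cst _ _ e1
    | inr k =>
      simp only [e1] at e
      split_ifs at e
      cases e
      rw [(H.var _ _ e1).2.2.2.1]; exact hα k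
  · rw [rs_start H] at e
    obtain ⟨h1, h2, h3, h4, h5⟩ := H.var _ _ e.1
    exact ⟨h1, (rs_start H).2 ⟨h2, e.2⟩, h3, h4, fun k hk hk' ek => h5 k hk hk' ((rs_start H).1 ek).1⟩
  · obtain ⟨j, h1, h2, h3, h4⟩ := hZ m N
    exact ⟨j, h1, (rs_start H).2 ⟨h2, h4⟩, h3⟩

theorem rs_val (H : Vs t Al h) {Z : Set ℕ} {α : ℕ → Λ} (hw : Wd Al (rs h Z α) w) {i}
    (e : h i = Sum.inr i) (hi : i ∉ Z) : w i = α i :=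
  hw.2.1 _ _ (by simp [rs, e, hi])

def Loc (D : ℕ → (ℕ → Λ) → Prop) : Prop :=
  ∀ d w w', (∀ j, j < d → w j = w' j) → D d w → D d w'

def Meets (t : ℕ → ℕ) (Al : ℕ → Finset Λ) (τ : ℕ) (D : ℕ → (ℕ → Λ) → Prop) (h : ℕ → Λ ⊕ ℕ) :
    Prop := ∃ d w, h d = Sum.inr d ∧ t d = τ ∧ Wd Al h w ∧ D d w

def Large (t : ℕ → ℕ) (Al : ℕ → Finset Λ) (τ : ℕ) (D : ℕ → (ℕ → Λ) → Prop) (h : ℕ → Λ ⊕ ℕ) :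
    Prop := ∀ h', Vs t Al h' → Le h' h → Meets t Al τ D h'

variable {τ : ℕ} {D D' : ℕ → (ℕ → Λ) → Prop}

theorem Large.le (H : Vs t Al h) (H' : Vs t Al h') (hl : Large t Al τ D h) (a : Le h' h) : Large t Al τ D h' :=
  fun h2 v2 a2 => hl h2 v2 (Le.trans H' a2 a)

theorem Large.mono (hl : Large t Al τ D h) (hD : ∀ d w, D d w → D' d w) : Large t Al τ D' h := by
  intro h2 v2 a2
  obtain ⟨d, w, h1, h3, h4, h5⟩ := hl h2 v2 a2
  exact ⟨d, w, h1, h3, h4, hD _ _ h5⟩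

theorem partition {κ : Type} [Finite κ] (Dc : κ → ℕ → (ℕ → Λ) → Prop) (H : Vs t Al h)
    (hc : ∀ h', Vs t Al h' → Le h' h → ∃ c, Meets t Al τ (Dc c) h') :
    ∃ c h', Vs t Al h' ∧ Le h' h ∧ Large t Al τ (Dc c) h' := by
  classical
  have := Fintype.ofFinite κ
  have key : ∀ s : Finset κ, ∀ h, Vs t Al h →
      (∀ h', Vs t Al h' → Le h' h → ∃ c ∈ s, Meets t Al τ (Dc c) h') →
      ∃ c h', Vs t Al h' ∧ Le h' h ∧ Large t Al τ (Dc c) h' := by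
    intro s
    induction s using Finset.induction_on with
    | empty =>
      intro h H hc
      obtain ⟨c, hc, _⟩ := hc h H (Le.refl H)
      simp at hc
    | insert c s _ ih =>
      intro h H hc
      by_cases hl : Large t Al τ (Dc c) h
      · exact ⟨c, h, H, Le.refl H, hl⟩
      · unfold Large at hl
        push Not at hl
        obtain ⟨h1, v1, l1, n1⟩ := hl
        obtain ⟨c', h2, v2, l2, g2⟩ := ih h1 v1 (fun h2 v2 l2 => by
          obtain ⟨c', hc', m⟩ := hc h2 v2 (Le.trans v1 l2 l1)
          rw [Finset.mem_insert] at hc'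
          rcases hc' with rfl | hc'
          · exfalso
            apply n1
            obtain ⟨d, w, a1, a2, a3, a4⟩ := m
            exact ⟨d, w, start_of_le v1 v2 l2 a1, a2, a3.of_le l2, a4⟩
          · exact ⟨c', hc', m⟩)
        exact ⟨c', h2, v2, Le.trans v1 l2 l1, g2⟩
  exact key Finset.univ h H (fun h' v l => by simpa using hc h' v l)

theorem exists_back (H : Vs t Al h) (hne : ∀ j, (Al j).Nonempty) (hD : Loc D)
    (hl : Large t Al τ D h) :
    ∃ k0, h k0 = Sum.inr k0 ∧ ∀ w, Wd Al h w → ∀ d, k0 ≤ d → h d = Sum.inr d → t d = τ →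
      ∃ w', Wd Al h w' ∧ (∀ j, k0 ≤ j → w' j = w j) ∧ D d w' := by
  classical
  by_contra hcon
  push Not at hcon
  have hcon' : ∀ k0, ∃ w d, h k0 = Sum.inr k0 → (Wd Al h w ∧ k0 ≤ d ∧ h d = Sum.inr d ∧ t d = τ ∧
      ∀ w', Wd Al h w' → (∀ j, k0 ≤ j → w' j = w j) → ¬ D d w') := by
    intro k0
    by_cases e : h k0 = Sum.inr k0
    · obtain ⟨w, h1, d, h2, h3, h4, h5⟩ := hcon k0 e
      exact ⟨w, d, fun _ => ⟨h1, h2, h3, h4, h5⟩⟩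
    · exact ⟨fun j => (hne j).choose, 0, fun e' => absurd e' e⟩
  choose W df hW using hcon'
  choose pick hp1 hp2 hp3 using H.inf
  choose α0 hα0 using hne
  let zf : ℕ → ℕ → ℕ := fun n b => pick n.unpair.1 (b + 1)
  let kf : ℕ → ℕ → ℕ := fun n b => pick τ (zf n b + 1)
  let b : ℕ → ℕ := fun n => Nat.rec 0 (fun n b => df (kf n b)) n
  have hb : ∀ n, b (n + 1) = df (kf n (b n)) := fun n => rfl
  let z : ℕ → ℕ := fun n => zf n (b n)
  let k : ℕ → ℕ := fun n => kf n (b n)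
  have hz : ∀ n, b n < z n := fun n => hp1 _ (b n + 1)
  have hk : ∀ n, z n < k n := fun n => hp1 _ (z n + 1)
  have hks : ∀ n, h (k n) = Sum.inr (k n) := fun n => hp2 _ _
  have hzs : ∀ n, h (z n) = Sum.inr (z n) := fun n => hp2 _ _
  have hzt : ∀ n, t (z n) = n.unpair.1 := fun n => hp3 _ _
  have hkb : ∀ n, k n ≤ b (n + 1) := fun n => (hW (k n) (hks n)).2.1
  have hbs : ∀ n, h (b (n+1)) = Sum.inr (b (n+1)) := fun n => (hW (k n) (hks n)).2.2.1
  have hbt : ∀ n, t (b (n+1)) = τ := fun n => (hW (k n) (hks n)).2.2.2.1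
  have hbm : StrictMono b := strictMono_nat_of_lt_succ fun n => by
    have := hz n; have := hk n; have := hkb n; omega
  let Z : Set ℕ := {x | (∃ n, x = b (n+1)) ∨ ∃ n, x = z n ∧ t (z n) ≠ τ}
  have hZ : ∀ n x, x ∈ Z → k n ≤ x → b (n+1) ≤ x := by
    intro n x hx hkx
    rcases hx with ⟨m, rfl⟩ | ⟨m, rfl, _⟩
    · have : b n < b (m+1) := by have := hz n; have := hk n; omega
      have := (hbm.lt_iff_lt (a := n) (b := m+1)).1 this
      exact hbm.monotone (show n + 1 ≤ m + 1 by omega)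
    · have : n < m := by
        by_contra hc
        have h1 : m ≤ n := by omega
        rcases Nat.lt_or_ge m n with h2 | h2
        · have := hbm.monotone (show m + 1 ≤ n by omega)
          have := hk m; have := hkb m; have := hz n; have := hk n
          omega
        · have : m = n := by omega
          subst this
          have := hk m; omega
      have := hbm.monotone (show n + 1 ≤ m by omega)
      have := hz m
      omega
  let α : ℕ → Λ := fun i => if hi : ∃ n, k n ≤ i ∧ i < b (n+1) then W (k hi.choose) i else α0 i
  have hαv : ∀ i, α i ∈ Al i := by
    intro i
    by_cases hi : ∃ n, k n ≤ i ∧ i < b (n+1)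
    · simp only [α, dif_pos hi]; exact (hW _ (hks _)).1.1 i
    · simp only [α, dif_neg hi]; exact hα0 i
  have hαk : ∀ n i, k n ≤ i → i < b (n+1) → α i = W (k n) i := by
    intro n i h1 h2
    have hi : ∃ n, k n ≤ i ∧ i < b (n+1) := ⟨n, h1, h2⟩
    simp only [α, dif_pos hi]
    have hs := hi.choose_spec
    have : hi.choose = n := by
      have a1 := hz n; have a2 := hk n
      have a3 := hz hi.choose; have a4 := hk hi.choose
      have b1 : n < hi.choose + 1 := hbm.lt_iff_lt.1 (by omega)
      have b2 : hi.choose < n + 1 := hbm.lt_iff_lt.1 (by omega)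
      omega
    rw [this]
  have V' : Vs t Al (rs h Z α) := by
    refine rs_Vs H hαv (fun m N => ?_)
    by_cases hm : m = τ
    · subst hm
      exact ⟨b (N+1), by have := hbm.id_le (N+1); simp at this; omega, hbs N, hbt N, Or.inl ⟨N, rfl⟩⟩
    · refine ⟨z (Nat.pair m N), ?_, hzs _, by rw [hzt]; simp, Or.inr ⟨_, rfl, by rw [hzt]; simpa⟩⟩
      have := hbm.id_le (Nat.pair m N)
      have := hz (Nat.pair m N)
      have := Nat.right_le_pair m N
      simp at *
      omega
  obtain ⟨d, w, e1, e2, e3, e4⟩ := hl _ V' (rs_Le H Z α)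
  have hd := (rs_start H).1 e1
  obtain ⟨n, rfl⟩ : ∃ n, d = b (n+1) := by
    rcases hd.2 with h1 | ⟨m, rfl, h2⟩
    · exact h1
    · exact absurd e2 h2
  have hw : Wd Al h w := e3.of_le (rs_Le H Z α)
  obtain ⟨g1, g2, g3, g4, g5⟩ := hW (k n) (hks n)
  refine g5 (ov (b (n+1)) w (W (k n))) (ov_Wd H (hbs n) hw g1) ?_ (hD _ _ _ ?_ e4)
  · intro j hj
    unfold ov
    split_ifs with hjb
    · cases e : h j with
      | inl c => rw [hw.2.1 _ _ e, g1.2.1 _ _ e]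
      | inr i =>
        have h1 := block H (hks n) hj e
        have h2 := H.var _ _ e
        rw [hw.2.2 _ _ e, g1.2.2 _ _ e, rs_val H e3 h2.2.1, hαk n i h1 (by omega)]
        intro hi
        have := hZ n i hi h1
        omega
    · rfl
  · intro j hj
    have hj' : j < b (n+1) := hj
    simp only [ov, if_pos hj']
end PC

namespace PC
variable {Λ : Type}
variable {t : ℕ → ℕ} {Al : ℕ → Finset Λ} {h h' h'' : ℕ → Λ ⊕ ℕ} {w w' : ℕ → Λ}
variable {τ : ℕ} {D D' : ℕ → (ℕ → Λ) → Prop}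

def nxt (Al : ℕ → Finset Λ) (D : ℕ → (ℕ → Λ) → Prop) (g : ℕ → Option Λ) (p s : ℕ) :
    ℕ → (ℕ → Λ) → Prop := fun d w => ∀ a ∈ Al p, D d (ov s (fun j => (g j).getD a) w)

theorem nxt_Loc (hD : Loc D) {g : ℕ → Option Λ} {p s : ℕ} : Loc (nxt Al D g p s) := by
  intro d w w' hw h1 a ha
  refine hD _ _ _ (fun j hj => ?_) (h1 a ha)
  unfold ov
  split_ifs
  · rfl
  · exact hw j hj

structure Stp (t : ℕ → ℕ) (Al : ℕ → Finset Λ) (τ : ℕ) (D : ℕ → (ℕ → Λ) → Prop) (h : ℕ → Λ ⊕ ℕ)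
    (m : ℕ) (g : ℕ → Option Λ) (p s : ℕ) (h' : ℕ → Λ ⊕ ℕ) : Prop where
  tp : t p = m
  ps : p < s
  hs : h s = Sum.inr s
  hp : h p = Sum.inr p
  gp : g p = none
  gn : ∀ j, j < p → g j ≠ none
  gt : ∀ j, j < s → g j = none → t j = t p ∧ Al j = Al p
  gA : ∀ j c, j < s → g j = some c → c ∈ Al j
  gc : ∀ j c, j < s → h j = Sum.inl c → g j = some c
  gv : ∀ j i, j < s → h j = Sum.inr i → g j = g i
  V' : Vs t Al h'
  L' : Le h' h
  S' : ∀ j, h' j = Sum.inr j → s ≤ j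
  big : Large t Al τ (nxt Al D g p s) h'

theorem hj_step [Finite Λ] (H : Vs t Al h) (hne : ∀ j, (Al j).Nonempty) (hD : Loc D)
    (hl : Large t Al τ D h) (m : ℕ) : ∃ g p s h', Stp t Al τ D h m g p s h' := by
  classical
  obtain ⟨k0, hk0, hback⟩ := exists_back H hne hD hl
  choose w0 hw0 using hne
  obtain ⟨L, hL⟩ : ∃ L : Finset Λ, {j | k0 ≤ j ∧ h j = Sum.inr j ∧ t j = m ∧ Al j = L}.Infinite := by
    by_contra hc
    push Not at hc
    have : (⋃ L : Finset Λ, {j | k0 ≤ j ∧ h j = Sum.inr j ∧ t j = m ∧ Al j = L}).Finite :=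
      Set.finite_iUnion (fun L => Set.not_infinite.1 (by simpa using hc L))
    obtain ⟨N, hN⟩ := this.bddAbove
    obtain ⟨j, h1, h2, h3⟩ := H.inf m (max k0 (N+1))
    have h4 : j ≤ N := hN (by simp only [mem_iUnion, mem_ofPred_eq]; exact ⟨Al j, by omega, h2, h3, rfl⟩)
    omega
  obtain ⟨ι, _, hHJ⟩ := Combinatorics.Line.exists_mono_in_high_dimension {x // x ∈ L}
    ((i : Fin k0) → {x // x ∈ Al i})
  obtain ⟨φ, hφi, hφ⟩ : ∃ φ : ι → ℕ, Function.Injective φ ∧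
      ∀ x, k0 ≤ φ x ∧ h (φ x) = Sum.inr (φ x) ∧ t (φ x) = m ∧ Al (φ x) = L := by
    let e := hL.natEmbedding
    let f := Fintype.equivFin ι
    refine ⟨fun x => (e (f x)).1, fun x y hxy => ?_, fun x => (e (f x)).2⟩
    have := e.injective (Subtype.ext hxy)
    exact f.injective (Fin.ext this)
  obtain ⟨s1, hs1, hs1s, -⟩ := H.inf 0 (k0 + Finset.univ.sup φ + 1)
  have hφs : ∀ x, φ x < s1 := fun x => by
    have := Finset.le_sup (f := φ) (Finset.mem_univ x); omega
  let K := (i : Fin k0) → {x // x ∈ Al i}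
  let LL := Combinatorics.Line {x // x ∈ L} ι
  let G0 : LL → ℕ → Option Λ := fun ℓ =>
    Function.extend φ (fun x => (ℓ.idxFun x).map Subtype.val) (fun i => some (w0 i))
  let G1 : LL → K → ℕ → Option Λ := fun ℓ c i => if hi : i < k0 then some (c ⟨i, hi⟩).1 else G0 ℓ i
  let G : LL → K → ℕ → Option Λ := fun ℓ c j => match h j with
    | Sum.inl c' => some c'
    | Sum.inr i => G1 ℓ c i
  have hG0φ : ∀ ℓ x, G0 ℓ (φ x) = (ℓ.idxFun x).map Subtype.val := fun ℓ x => hφi.extend_apply _ _ _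
  have hG0n : ∀ ℓ i, (¬ ∃ x, φ x = i) → G0 ℓ i = some (w0 i) :=
    fun ℓ i hi => Function.extend_apply' _ _ _ hi
  have hGl : ∀ ℓ c j c', h j = Sum.inl c' → G ℓ c j = some c' := by
    intro ℓ c j c' e; simp only [G, e]
  have hGr : ∀ ℓ c j i, h j = Sum.inr i → G ℓ c j = G1 ℓ c i := by
    intro ℓ c j c' e; simp only [G, e]
  have hG1n : ∀ ℓ c i, G1 ℓ c i = none → ∃ x, φ x = i ∧ ℓ.idxFun x = none := by
    intro ℓ c i e
    simp only [G1] at e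
    split_ifs at e with hi
    by_cases hx : ∃ x, φ x = i
    · obtain ⟨x, rfl⟩ := hx
      rw [hG0φ] at e
      exact ⟨x, rfl, by simpa using e⟩
    · rw [hG0n _ _ hx] at e; cases e
  have hG1s : ∀ ℓ c i a, G1 ℓ c i = some a → a ∈ Al i := by
    intro ℓ c i a e
    simp only [G1] at e
    split_ifs at e with hi
    · cases e; exact (c ⟨i, hi⟩).2
    by_cases hx : ∃ x, φ x = i
    · obtain ⟨x, rfl⟩ := hx
      rw [hG0φ] at e
      rw [(hφ x).2.2.2]
      obtain ⟨y, _, rfl⟩ := Option.map_eq_some_iff.1 e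
      exact y.2
    · rw [hG0n _ _ hx] at e; cases e; exact hw0 i
  let pS : LL → Set ℕ := fun ℓ => {q | ∃ x, φ x = q ∧ ℓ.idxFun x = none}
  let p : LL → ℕ := fun ℓ => sInf (pS ℓ)
  have hpm : ∀ ℓ, p ℓ ∈ pS ℓ := fun ℓ => Nat.sInf_mem (by
    obtain ⟨x, hx⟩ := ℓ.proper
    exact ⟨φ x, x, rfl, hx⟩)
  have : Finite LL := Finite.of_injective (fun ℓ : LL => ℓ.idxFun) (by
    rintro ⟨a, _⟩ ⟨b, _⟩ hab
    have hab' : a = b := hab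
    subst hab'; rfl)
  let h1 := rs h {j | s1 ≤ j} w0
  have V1 : Vs t Al h1 := rs_Vs H hw0 (fun m N => by
    obtain ⟨j, a, b, c⟩ := H.inf m (max N s1)
    exact ⟨j, by omega, b, c, by simp only [mem_ofPred_eq]; omega⟩)
  have L1 : Le h1 h := rs_Le H _ _
  obtain ⟨⟨ℓ, c⟩, h', V', L', big⟩ := partition (t := t) (Al := Al) (τ := τ) (h := h1)
    (fun q : LL × K => nxt Al D (G q.1 q.2) (p q.1) s1) V1 (by
    intro h2 V2 L2
    obtain ⟨d, -, hd, htd⟩ := V2.inf τ 0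
    have hdh := (rs_start H).1 (start_of_le V1 V2 L2 hd)
    have hds : s1 ≤ d := hdh.2
    let w := sb h2 w0
    have hw2 : Wd Al h2 w := sb_Wd V2 hw0
    have hwh : Wd Al h w := (hw2.of_le L2).of_le L1
    let αv : (ι → {x // x ∈ L}) → ℕ → Λ := fun v i =>
      if s1 ≤ i then w i else Function.extend φ (fun x => (v x).1) w0 i
    have hαv : ∀ v i, αv v i ∈ Al i := by
      intro v i
      simp only [αv]
      split_ifs
      · exact hwh.1 i
      · by_cases hx : ∃ x, φ x = i
        · obtain ⟨x, rfl⟩ := hx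
          rw [hφi.extend_apply, (hφ x).2.2.2]; exact (v x).2
        · rw [Function.extend_apply' _ _ _ hx]; exact hw0 i
    have := fun v => hback (sb h (αv v)) (sb_Wd H (hαv v)) d (by omega) hdh.1 htd
    choose W hW1 hW2 hW3 using this
    obtain ⟨ℓ, c, hc⟩ := hHJ (fun v i => ⟨W v i, (hW1 v).1 i⟩)
    refine ⟨(ℓ, c), d, w, hd, htd, hw2, ?_⟩
    intro a ha
    obtain ⟨x0, hx0, -⟩ := hpm ℓ
    have haL : a ∈ L := by
      rw [← (hφ x0).2.2.2, hx0]; exact ha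
    refine hD d (W (ℓ ⟨a, haL⟩)) _ (fun j hj => ?_) (hW3 _)
    unfold ov
    split_ifs with hjs
    · cases e : h j with
      | inl c' => rw [(hW1 _).2.1 _ _ e]; simp only [hGl _ _ _ _ e]; rfl
      | inr i =>
        rw [(hW1 _).2.2 _ _ e]; simp only [hGr _ _ _ _ e]
        have hi := H.var _ _ e
        simp only [G1]
        split_ifs with hik
        · have := congrFun (hc ⟨a, haL⟩) ⟨i, hik⟩
          exact congrArg Subtype.val this
        · rw [hW2 _ i (by omega), sb_inr _ hi.2.1]
          simp only [αv]
          rw [if_neg (by omega)]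
          by_cases hx : ∃ x, φ x = i
          · obtain ⟨x, rfl⟩ := hx
            rw [hφi.extend_apply, hG0φ, Combinatorics.Line.apply_def]
            beta_reduce
            cases ℓ.idxFun x <;> rfl
          · rw [Function.extend_apply' _ _ _ hx, hG0n _ _ hx]; rfl
    · rw [hW2 _ j (by omega)]
      cases e : h j with
      | inl c' => rw [sb_inl _ e, hwh.2.1 _ _ e]
      | inr i =>
        have hi := block H hs1s (by omega) e
        rw [sb_inr _ e, hwh.2.2 _ _ e]
        simp only [αv, if_pos hi])
  obtain ⟨x0, hx0, hx0n⟩ := hpm ℓ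
  refine ⟨G ℓ c, p ℓ, s1, h', ?_⟩
  constructor
  · rw [← hx0]; exact (hφ x0).2.2.1
  · rw [← hx0]; exact hφs x0
  · exact hs1s
  · rw [← hx0]; exact (hφ x0).2.1
  · rw [← hx0, hGr _ _ _ _ (hφ x0).2.1]
    simp only [G1]
    have := (hφ x0).1
    rw [dif_neg (by omega), hG0φ, hx0n]; rfl
  · intro j hj e
    cases e1 : h j with
    | inl c' => rw [hGl _ _ _ _ e1] at e; cases e
    | inr i =>
      rw [hGr _ _ _ _ e1] at e
      have : p ℓ ≤ i := Nat.sInf_le (hG1n _ _ _ e)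
      have := (H.var _ _ e1).1
      omega
  · intro j hj e
    cases e1 : h j with
    | inl c' => rw [hGl _ _ _ _ e1] at e; cases e
    | inr i =>
      rw [hGr _ _ _ _ e1] at e
      obtain ⟨x, hx, _⟩ := hG1n _ _ _ e
      have h3 := H.var _ _ e1
      rw [h3.2.2.1, h3.2.2.2.1, ← hx, ← hx0, (hφ x).2.2.1, (hφ x).2.2.2, (hφ x0).2.2.1, (hφ x0).2.2.2]
      exact ⟨rfl, rfl⟩
  · intro j a _ e
    cases e1 : h j with
    | inl c' => rw [hGl _ _ _ _ e1] at e; cases e; exact H.cst _ _ e1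
    | inr i =>
      rw [hGr _ _ _ _ e1] at e
      rw [(H.var _ _ e1).2.2.2.1]
      exact hG1s _ _ _ _ e
  · intro j c' _ e; exact hGl _ _ _ _ e
  · intro j i _ e; rw [hGr _ _ _ _ e, hGr _ _ _ _ (H.var _ _ e).2.1]
  · exact V'
  · exact Le.trans V1 L' L1
  · intro j e; exact ((rs_start H).1 (start_of_le V1 V' L' e)).2
  · exact big
end PC

namespace PC
variable {Λ : Type}
variable {t : ℕ → ℕ} {Al : ℕ → Finset Λ} {h h' h'' : ℕ → Λ ⊕ ℕ} {w w' : ℕ → Λ}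
variable {τ : ℕ} {D D' : ℕ → (ℕ → Λ) → Prop}

def SS (ss : ℕ → ℕ) : ℕ → ℕ
  | 0 => 0
  | n + 1 => ss n

/-- Data of an infinite iteration of steps. -/
structure Iter (t : ℕ → ℕ) (Al : ℕ → Finset Λ) (τ : ℕ) (ρ : ℕ → ℕ)
    (DD : ℕ → ℕ → (ℕ → Λ) → Prop) (hh : ℕ → ℕ → Λ ⊕ ℕ) (gg : ℕ → ℕ → Option Λ)
    (pp ss : ℕ → ℕ) : Prop where
  loc : ∀ n, Loc (DD n)
  vs : ∀ n, Vs t Al (hh n)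
  lg : ∀ n, Large t Al τ (DD n) (hh n)
  stp : ∀ n, Stp t Al τ (DD n) (hh n) (ρ n) (gg n) (pp n) (ss n) (hh (n + 1))
  nx : ∀ n, DD (n + 1) = nxt Al (DD n) (gg n) (pp n) (ss n)

theorem exists_iter (ρ : ℕ → ℕ)
    (Φ : (ℕ → (ℕ → Λ) → Prop) → ℕ → (ℕ → Option Λ) → ℕ → Prop)
    (H : ∀ D h m, Loc D → Vs t Al h → Large t Al τ D h →
      ∃ g p s h', Stp t Al τ D h m g p s h' ∧ Φ D m g p)
    (hD : Loc D) (hV : Vs t Al h) (hL : Large t Al τ D h) :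
    ∃ DD hh gg pp ss, Iter t Al τ ρ DD hh gg pp ss ∧ DD 0 = D ∧ hh 0 = h ∧
      ∀ n, Φ (DD n) (ρ n) (gg n) (pp n) := by
  choose g p s h' hst hΦ using H
  let St := {q : (ℕ → (ℕ → Λ) → Prop) × (ℕ → Λ ⊕ ℕ) // Loc q.1 ∧ Vs t Al q.2 ∧ Large t Al τ q.1 q.2}
  let G : St → ℕ → ℕ → Option Λ := fun q m => g q.1.1 q.1.2 m q.2.1 q.2.2.1 q.2.2.2
  let P : St → ℕ → ℕ := fun q m => p q.1.1 q.1.2 m q.2.1 q.2.2.1 q.2.2.2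
  let S : St → ℕ → ℕ := fun q m => s q.1.1 q.1.2 m q.2.1 q.2.2.1 q.2.2.2
  let h2 : St → ℕ → ℕ → Λ ⊕ ℕ := fun q m => h' q.1.1 q.1.2 m q.2.1 q.2.2.1 q.2.2.2
  have hS : ∀ q m, Stp t Al τ q.1.1 q.1.2 m (G q m) (P q m) (S q m) (h2 q m) :=
    fun q m => hst q.1.1 q.1.2 m q.2.1 q.2.2.1 q.2.2.2
  let nx : St → ℕ → St := fun q m => ⟨(nxt Al q.1.1 (G q m) (P q m) (S q m), h2 q m),
    nxt_Loc q.2.1, (hS q m).V', (hS q m).big⟩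
  let sq : ℕ → St := fun n => Nat.rec ⟨(D, h), hD, hV, hL⟩ (fun n q => nx q (ρ n)) n
  refine ⟨fun n => (sq n).1.1, fun n => (sq n).1.2, fun n => G (sq n) (ρ n), fun n => P (sq n) (ρ n),
    fun n => S (sq n) (ρ n), ⟨fun n => (sq n).2.1, fun n => (sq n).2.2.1, fun n => (sq n).2.2.2,
      fun n => hS (sq n) (ρ n), fun n => rfl⟩, rfl, rfl, fun n => hΦ _ _ _ _ _ _⟩

theorem Stp.g_congr {g : ℕ → Option Λ} {p s m : ℕ} (H : Stp t Al τ D h m g p s h') {j i}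
    (hj : j < s) (hi : i < s) (e : h j = h i) : g j = g i := by
  cases e1 : h j with
  | inl c => rw [H.gc _ _ hj e1, H.gc _ _ hi (e ▸ e1)]
  | inr k => rw [H.gv _ _ hj e1, H.gv _ _ hi (e ▸ e1)]

section
variable {ρ : ℕ → ℕ} {DD : ℕ → ℕ → (ℕ → Λ) → Prop} {hh : ℕ → ℕ → Λ ⊕ ℕ} {gg : ℕ → ℕ → Option Λ}
    {pp ss : ℕ → ℕ}

theorem Iter.S_le (H : Iter t Al τ ρ DD hh gg pp ss) (n : ℕ) : SS ss n ≤ pp n := by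
  cases n with
  | zero => simp [SS]
  | succ n => exact (H.stp n).S' _ (H.stp (n+1)).hp

theorem Iter.hhle (H : Iter t Al τ ρ DD hh gg pp ss) (n : ℕ) : Le (hh n) (hh 0) := by
  induction n with
  | zero => exact Le.refl (H.vs 0)
  | succ n ih => exact Le.trans (H.vs n) (H.stp n).L' ih

theorem Iter.pp_start (H : Iter t Al τ ρ DD hh gg pp ss) (n : ℕ) : hh 0 (pp n) = Sum.inr (pp n) :=
  start_of_le (H.vs 0) (H.vs n) (H.hhle n) (H.stp n).hp

theorem Iter.ss_start (H : Iter t Al τ ρ DD hh gg pp ss) (n : ℕ) : hh 0 (ss n) = Sum.inr (ss n) :=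
  start_of_le (H.vs 0) (H.vs n) (H.hhle n) (H.stp n).hs

theorem Iter.ssm (H : Iter t Al τ ρ DD hh gg pp ss) : StrictMono ss :=
  strictMono_nat_of_lt_succ fun n => by
    have := H.S_le (n+1); have := (H.stp (n+1)).ps; simp [SS] at *; omega

theorem Iter.ppm (H : Iter t Al τ ρ DD hh gg pp ss) : StrictMono pp :=
  strictMono_nat_of_lt_succ fun n => by
    have := H.S_le (n+1); have := (H.stp n).ps; simp [SS] at *; omega

theorem Iter.seg (H : Iter t Al τ ρ DD hh gg pp ss) (j : ℕ) : ∃ n, SS ss n ≤ j ∧ j < ss n := by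
  have : ∃ n, j < ss n := ⟨j + 1, by have := H.ssm.id_le (j+1); simp at this; omega⟩
  classical
  refine ⟨Nat.find this, ?_, Nat.find_spec this⟩
  cases e : Nat.find this with
  | zero => simp [SS]
  | succ n =>
    have := Nat.find_min this (m := n) (by omega)
    simp [SS]; omega

theorem Iter.seg_unique (H : Iter t Al τ ρ DD hh gg pp ss) {j n m : ℕ} (h1 : SS ss n ≤ j)
    (h2 : j < ss n) (h3 : SS ss m ≤ j) (h4 : j < ss m) : n = m := by
  have key : ∀ n m, SS ss n ≤ j → j < ss m → n ≤ m := by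
    intro n m h1 h4
    cases n with
    | zero => omega
    | succ n =>
      simp [SS] at h1
      have := H.ssm.lt_iff_lt.1 (lt_of_le_of_lt h1 h4)
      omega
  exact le_antisymm (key _ _ h1 h4) (key _ _ h3 h2)

theorem Iter.lim (H : Iter t Al τ ρ DD hh gg pp ss) (hρ : ∀ m N, ∃ n, N ≤ n ∧ ρ n = m) :
    ∃ A, Vs t Al A ∧ Le A (hh 0) ∧ (∀ d, A d = Sum.inr d → ∃ n, d = pp n) ∧
      (∀ n j c, SS ss n ≤ j → j < ss n → gg n j = some c → A j = Sum.inl c) ∧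
      ∀ n d w', DD n d w' → ∀ w, Wd Al A w → DD 0 d (ov (SS ss n) w w') := by
  choose sg hs1 hs2 using H.seg
  let A : ℕ → Λ ⊕ ℕ := fun j => match gg (sg j) j with
    | some c => Sum.inl c
    | none => Sum.inr (pp (sg j))
  have A1 : ∀ n j c, SS ss n ≤ j → j < ss n → gg n j = some c → A j = Sum.inl c := by
    intro n j c h1 h2 e
    have := H.seg_unique h1 h2 (hs1 j) (hs2 j)
    subst this
    simp only [A, e]
  have A2 : ∀ n j, SS ss n ≤ j → j < ss n → gg n j = none → A j = Sum.inr (pp n) := by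
    intro n j h1 h2 e
    have := H.seg_unique h1 h2 (hs1 j) (hs2 j)
    subst this
    simp only [A, e]
  have Ap : ∀ n, A (pp n) = Sum.inr (pp n) := fun n =>
    A2 n _ (H.S_le n) (H.stp n).ps (H.stp n).gp
  have Ar : ∀ n j i, SS ss n ≤ j → j < ss n → A j = Sum.inr i → gg n j = none ∧ i = pp n := by
    intro n j i h1 h2 e
    cases e1 : gg n j with
    | some c => rw [A1 n j c h1 h2 e1] at e; cases e
    | none => rw [A2 n j h1 h2 e1] at e; cases e; exact ⟨rfl, rfl⟩
  have VA : Vs t Al A := by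
    refine ⟨fun j c e => ?_, fun j i e => ?_, fun m N => ?_⟩
    · obtain ⟨n, h1, h2⟩ := H.seg j
      cases e1 : gg n j with
      | some c' => rw [A1 n j c' h1 h2 e1] at e; cases e; exact (H.stp n).gA _ _ h2 e1
      | none => rw [A2 n j h1 h2 e1] at e; cases e
    · obtain ⟨n, h1, h2⟩ := H.seg j
      obtain ⟨h3, rfl⟩ := Ar n j i h1 h2 e
      have h4 : pp n ≤ j := by
        by_contra hc
        exact (H.stp n).gn j (by omega) h3
      have h5 := (H.stp n).gt j h2 h3
      refine ⟨h4, Ap n, h5.1, h5.2, fun k hk hk' ek => ?_⟩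
      have hS := H.S_le n
      have := (Ar n k k (by omega) (by omega) ek).2
      omega
    · obtain ⟨n, h1, h2⟩ := hρ m N
      refine ⟨pp n, ?_, Ap n, by rw [(H.stp n).tp, h2]⟩
      have := H.ppm.id_le n
      simp at this; omega
  have LA : Le A (hh 0) := by
    refine ⟨fun j c e => ?_, fun j i e => ?_⟩
    · obtain ⟨n, h1, h2⟩ := H.seg j
      exact A1 n j c h1 h2 ((H.stp n).gc _ _ h2 ((H.hhle n).1 _ _ e))
    · obtain ⟨n, h1, h2⟩ := H.seg j
      have hi := ((H.vs 0).var _ _ e).1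
      have hSi : SS ss n ≤ i := by
        cases n with
        | zero => simp [SS]
        | succ n => exact block (H.vs 0) (H.ss_start n) h1 e
      have := (H.stp n).g_congr h2 (by omega) ((H.hhle n).2 _ _ e)
      cases e1 : gg n j with
      | some c' => rw [A1 n j c' h1 h2 e1, A1 n i c' hSi (by omega) (this ▸ e1)]
      | none => rw [A2 n j h1 h2 e1, A2 n i hSi (by omega) (this ▸ e1)]
  refine ⟨A, VA, LA, ?_, A1, ?_⟩
  · intro d e
    obtain ⟨n, h1, h2⟩ := H.seg d
    exact ⟨n, (Ar n d d h1 h2 e).2⟩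
  · intro n
    induction n with
    | zero => intro d w' h1 w hw; exact h1
    | succ n ih =>
      intro d w' h1 w hw
      rw [H.nx n] at h1
      have h2 := ih d _ (h1 (w (pp n)) (hw.1 _)) w hw
      have hSs : SS ss (n+1) = ss n := rfl
      rw [hSs]
      convert h2 using 1
      funext j
      simp only [ov]
      have hS := H.S_le n
      have hp := (H.stp n).ps
      by_cases hj : j < SS ss n
      · rw [if_pos (by omega), if_pos hj]
      · by_cases hj2 : j < ss n
        · rw [if_pos hj2, if_neg hj, if_pos hj2]
          cases e1 : gg n j with
          | some c => rw [hw.2.1 _ _ (A1 n j c (by omega) hj2 e1)]; rfl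
          | none => rw [hw.2.2 _ _ (A2 n j (by omega) hj2 e1)]; rfl
        · rw [if_neg hj2, if_neg hj, if_neg hj2]
end

theorem rho_inf (m N : ℕ) : ∃ n, N ≤ n ∧ n.unpair.1 = m :=
  ⟨Nat.pair m N, Nat.right_le_pair m N, by simp⟩

theorem star_step [Finite Λ] (H : Vs t Al h) (hne : ∀ j, (Al j).Nonempty) (hD : Loc D)
    (hl : Large t Al τ D h) : ∃ g p s h', Stp t Al τ D h τ g p s h' ∧
      ∀ a, D p (fun j => (g j).getD a) := by
  classical
  obtain ⟨DD, hh, gg, pp, ss, It, rfl, rfl, -⟩ := exists_iter (t := t) (Al := Al) (τ := τ)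
    (fun n => n.unpair.1) (fun _ _ _ _ => True)
    (fun D h m hD hV hL => by
      obtain ⟨g, p, s, h', hs⟩ := hj_step hV hne hD hL m
      exact ⟨g, p, s, h', hs, trivial⟩) hD H hl
  obtain ⟨A, VA, LA, hst, A1, U⟩ := It.lim rho_inf
  obtain ⟨d, w, hd, htd, hw, hDd⟩ := hl A VA LA
  obtain ⟨n, rfl⟩ := hst d hd
  have S := It.stp n
  have hSle := It.S_le n
  let g : ℕ → Option Λ := fun j => if j < pp n then some (w j) else gg n j
  have g1 : ∀ j, j < pp n → g j = some (w j) := fun j hj => if_pos hj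
  have g2 : ∀ j, ¬ j < pp n → g j = gg n j := fun j hj => if_neg hj
  have hwh := hw.of_le LA
  refine ⟨g, pp n, ss n, hh (n+1), ?_, ?_⟩
  · constructor
    · exact htd
    · exact S.ps
    · exact It.ss_start n
    · exact It.pp_start n
    · rw [g2 _ (lt_irrefl _)]; exact S.gp
    · intro j hj; rw [g1 j hj]; simp
    · intro j hj e
      by_cases hjp : j < pp n
      · rw [g1 j hjp] at e; cases e
      · rw [g2 j hjp] at e; exact S.gt j hj e
    · intro j c hj e
      by_cases hjp : j < pp n
      · rw [g1 j hjp] at e; cases e; exact hw.1 j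
      · rw [g2 j hjp] at e; exact S.gA j c hj e
    · intro j c hj e
      by_cases hjp : j < pp n
      · rw [g1 j hjp, hwh.2.1 _ _ e]
      · rw [g2 j hjp]; exact S.gc _ _ hj ((It.hhle n).1 _ _ e)
    · intro j i hj e
      have hi := ((It.vs 0).var _ _ e).1
      by_cases hjp : j < pp n
      · rw [g1 j hjp, g1 i (by omega), hwh.2.2 _ _ e]
      · have := block (It.vs 0) (It.pp_start n) (by omega) e
        rw [g2 j hjp, g2 i (by omega)]
        exact S.g_congr hj (by omega) ((It.hhle n).2 _ _ e)
    · exact S.V'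
    · exact It.hhle (n+1)
    · exact S.S'
    · refine (It.lg (n+1)).mono (fun d' w' h1 a ha => ?_)
      rw [It.nx n] at h1
      have h2 := U n _ _ (h1 a ha) w hw
      convert h2 using 1
      funext j
      simp only [ov]
      have hp := S.ps
      by_cases hj : j < SS ss n
      · rw [if_pos (by omega), if_pos hj, g1 j (by omega)]; rfl
      · rw [if_neg hj]
        by_cases hj2 : j < ss n
        · rw [if_pos hj2, if_pos hj2]
          by_cases hjp : j < pp n
          · rw [g1 j hjp]
            cases e1 : gg n j with
            | some c => rw [hw.2.1 _ _ (A1 n j c (by omega) hj2 e1)]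
            | none => exact absurd e1 (S.gn j hjp)
          · rw [g2 j hjp]
        · rw [if_neg hj2, if_neg hj2]
  · intro a
    refine hD _ _ _ (fun j hj => ?_) hDd
    rw [g1 j hj]; rfl

theorem main [Finite Λ] (H : Vs t Al h) (hne : ∀ j, (Al j).Nonempty) (hD : Loc D) (τ : ℕ) :
    ∃ A, Vs t Al A ∧ Le A h ∧
      ((∀ d w, A d = Sum.inr d → t d = τ → Wd Al A w → D d w) ∨
       (∀ d w, A d = Sum.inr d → t d = τ → Wd Al A w → ¬ D d w)) := by
  classical
  by_cases hl : Large t Al τ D h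
  · obtain ⟨DD, hh, gg, pp, ss, It, rfl, rfl, hΦ⟩ := exists_iter (t := t) (Al := Al) (τ := τ)
      (fun n => n.unpair.1) (fun D m g p => m = τ → ∀ a, D p (fun j => (g j).getD a))
      (fun D h m hD hV hL => by
        by_cases hm : m = τ
        · subst hm
          obtain ⟨g, p, s, h', hs, hs2⟩ := star_step hV hne hD hL
          exact ⟨g, p, s, h', hs, fun _ => hs2⟩
        · obtain ⟨g, p, s, h', hs⟩ := hj_step hV hne hD hL m
          exact ⟨g, p, s, h', hs, fun e => absurd e hm⟩) hD H hl
    obtain ⟨A, VA, LA, hst, A1, U⟩ := It.lim rho_inf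
    refine ⟨A, VA, LA, Or.inl ?_⟩
    intro d w hd htd hw
    obtain ⟨n, rfl⟩ := hst d hd
    have S := It.stp n
    have hSle := It.S_le n
    have h1 := hΦ n (by rw [← S.tp, htd]) (w 0)
    refine hD _ _ _ (fun j hj => ?_) (U n _ _ h1 w hw)
    have hp := S.ps
    simp only [ov]
    split_ifs with hjS
    · rfl
    · cases e1 : gg n j with
      | some c => rw [hw.2.1 _ _ (A1 n j c (by omega) (by omega) e1)]; rfl
      | none => exact absurd e1 (S.gn j hj)
  · unfold Large at hl
    push Not at hl
    obtain ⟨A, VA, LA, hA⟩ := hl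
    exact ⟨A, VA, LA, Or.inr fun d w h1 h2 h3 h4 => hA ⟨d, w, h1, h2, h3, h4⟩⟩
end PC

namespace FW

noncomputable def pr (e : ℕ → ℕ) (k : ℕ) : ℕ := Nat.nth (fun x => e x = x) k

/-- Minimal-representative functions of the members of the space. -/
structure Q (ty σ : ℕ → ℕ) (I : ℕ → Set ℕ) (e : ℕ → ℕ) : Prop where
  le : ∀ x, e x ≤ x
  id : ∀ x, e (e x) = e x
  inf : {x | e x = x}.Infinite
  tp : ∀ k, ty (pr e k) = σ k
  mem : ∀ x, ty x ∈ I (ty (e x))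

def fle (F E : ℕ → ℕ) : Prop := ∀ x, F (E x) = F x

def agr (n : ℕ) (F G : ℕ → ℕ) : Prop := pr F n = pr G n ∧ ∀ x, x < pr G n → F x = G x

variable {ty σ : ℕ → ℕ} {I : ℕ → Set ℕ} {E F G B A : ℕ → ℕ} {n m k l d : ℕ}

theorem pr_fix' (h : {x | E x = x}.Infinite) (k : ℕ) : E (pr E k) = pr E k :=
  Nat.nth_mem_of_infinite h k

theorem pr_mono' (h : {x | E x = x}.Infinite) : StrictMono (pr E) := Nat.nth_strictMono h

theorem Q.fix (h : Q ty σ I E) (k : ℕ) : E (pr E k) = pr E k := pr_fix' h.inf k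

theorem Q.mono (h : Q ty σ I E) : StrictMono (pr E) := pr_mono' h.inf

theorem Q.ge (h : Q ty σ I E) (k : ℕ) : k ≤ pr E k := h.mono.id_le k

theorem exists_pr {x : ℕ} (h : E x = x) : ∃ k, pr E k = x := by
  classical
  exact ⟨_, Nat.nth_count (p := fun x => E x = x) h⟩

theorem Q.idx (h : Q ty σ I E) (x : ℕ) : ∃ k, pr E k = E x := exists_pr (h.id x)

theorem pr_eq_of {z : ℕ → ℕ} (hz : StrictMono z) (h : ∀ x, E x = x ↔ ∃ k, z k = x) :
    pr E = z ∧ {x | E x = x}.Infinite := by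
  have h0 : {x | E x = x} = Set.range z := by ext x; simp [h x]
  have h1 : {x | E x = x}.Infinite := by
    rw [h0]; exact Set.infinite_range_of_injective hz.injective
  refine ⟨?_, h1⟩
  refine ((pr_mono' h1).range_inj hz).1 ?_
  rw [← h0]
  exact Nat.range_nth_of_infinite h1

theorem pr_transfer {N : ℕ} (hF : {x | F x = x}.Infinite) (h : pr F k = N) (h1 : ∀ x, x < N → F x = G x)
    (h2 : G N = N) : pr G k = N := by
  classical
  have e1 : Nat.count (fun x => F x = x) N = k := by
    rw [← h]; exact Nat.count_nth_of_infinite hF k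
  have e2 : Nat.count (fun x => G x = x) N = k := by
    rw [← e1, Nat.count_eq_card_filter_range, Nat.count_eq_card_filter_range]
    congr 1
    ext x
    simp only [Finset.mem_filter, Finset.mem_range]
    constructor
    · rintro ⟨a, b⟩; exact ⟨a, by rw [h1 x a]; exact b⟩
    · rintro ⟨a, b⟩; exact ⟨a, by rw [← h1 x a]; exact b⟩
  have := Nat.nth_count (p := fun x => G x = x) h2
  rw [e2] at this
  exact this

theorem fle_refl (h : Q ty σ I E) : fle E E := h.id

theorem fle_trans {H : ℕ → ℕ} (a : fle H F) (b : fle F E) : fle H E := fun x => by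
  rw [← a (E x), b x, a x]

theorem fle_val (hF : Q ty σ I F) (a : fle F E) (x : ℕ) : F x ≤ E x := by
  rw [← a x]; exact hF.le _

theorem fle_fix (hF : Q ty σ I F) (hE : Q ty σ I E) (a : fle F E) {x : ℕ} (h : F x = x) : E x = x := by
  have := fle_val hF a x
  have := hE.le x
  omega

theorem agr_refl : agr n E E := ⟨rfl, fun _ _ => rfl⟩

theorem agr_symm (h : agr n E F) : agr n F E := ⟨h.1.symm, fun x hx => (h.2 x (by rw [← h.1]; exact hx)).symm⟩

theorem agr_trans (h : agr n E F) (h' : agr n F G) : agr n E G :=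
  ⟨h.1.trans h'.1, fun x hx => (h.2 x (by rw [h'.1]; exact hx)).trans (h'.2 x hx)⟩

theorem agr_pr (hF : Q ty σ I F) (hG : Q ty σ I G) (h : agr n F G) (hk : k ≤ n) : pr F k = pr G k := by
  rcases Nat.lt_or_ge k n with h1 | h1
  · have h2 := hF.mono h1
    rw [h.1] at h2
    refine (pr_transfer (G := G) hF.inf rfl (fun x hx => h.2 x (by omega)) ?_).symm
    rw [← h.2 _ h2, hF.fix]
  · have : k = n := by omega
    rw [this]; exact h.1

theorem agr_le (hF : Q ty σ I F) (hG : Q ty σ I G) (h : agr n F G) (hk : k ≤ n) : agr k F G :=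
  ⟨agr_pr hF hG h hk, fun x hx => h.2 x (lt_of_lt_of_le hx (hG.mono.monotone hk))⟩

theorem agr_index (hF : Q ty σ I F) (hG : Q ty σ I G) (h : pr F m = pr G n)
    (h2 : ∀ x, x < pr G n → F x = G x) : m = n := by
  have := pr_transfer (G := G) hF.inf h h2 (hG.fix n)
  exact hG.mono.injective this

theorem fle_pr (hF : Q ty σ I F) (hE : Q ty σ I E) (a : fle F E) :
    ∃ δ : ℕ → ℕ, StrictMono δ ∧ ∀ k, pr F k = pr E (δ k) := by
  have : ∀ k, ∃ d, pr E d = pr F k := fun k => exists_pr (fle_fix hF hE a (hF.fix k))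
  choose δ hδ using this
  refine ⟨δ, fun i j hij => ?_, fun k => (hδ k).symm⟩
  have := hF.mono hij
  rw [← hδ, ← hδ] at this
  exact hE.mono.lt_iff_lt.1 this

theorem fle_pr' (hF : Q ty σ I F) (hE : Q ty σ I E) (a : fle F E) (k : ℕ) :
    ∃ d, k ≤ d ∧ pr F k = pr E d := by
  obtain ⟨δ, h1, h2⟩ := fle_pr hF hE a
  exact ⟨δ k, h1.id_le k, h2 k⟩

theorem agr_of_pr (hF : Q ty σ I F) (hE : Q ty σ I E) (a : fle F E) (h : pr F n = pr E n) :
    agr n F E := by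
  refine ⟨h, fun x hx => ?_⟩
  obtain ⟨δ, h1, h2⟩ := fle_pr hF hE a
  have hn : δ n = n := hE.mono.injective ((h2 n).symm.trans h)
  obtain ⟨j, hj⟩ := hE.idx x
  have hjn : j < n := by
    have := hE.le x
    exact hE.mono.lt_iff_lt.1 (by omega)
  have hδ : δ j = j := by
    have h3 := h1.id_le j
    have h4 : ∀ i, δ j + i ≤ δ (j + i) := by
      intro i
      induction i with
      | zero => exact le_rfl
      | succ i ih =>
        have := h1 (show j + i < j + (i + 1) by omega)
        omega
    have := h4 (n - j)
    rw [show j + (n - j) = n by omega] at this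
    simp at h3; omega
  have := h2 j
  rw [hδ] at this
  rw [← a x, ← hj, ← this, hF.fix]

/-- Membership in the basic set `[n, B]`. -/
structure Mem (ty σ : ℕ → ℕ) (I : ℕ → Set ℕ) (n : ℕ) (B F : ℕ → ℕ) : Prop where
  q : Q ty σ I F
  le : fle F B
  ag : agr n F B

theorem Mem.refl (hB : Q ty σ I B) : Mem ty σ I n B B := ⟨hB, hB.id, agr_refl⟩

theorem Mem.trans (h1 : Mem ty σ I n B A) (h2 : Mem ty σ I n A F) : Mem ty σ I n B F :=
  ⟨h2.q, fle_trans h2.le h1.le, agr_trans h2.ag h1.ag⟩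

theorem Mem.index_le (hB : Q ty σ I B) (h : Mem ty σ I n B F) (hk : k ≤ n) : Mem ty σ I k B F :=
  ⟨h.q, h.le, agr_le h.q hB h.ag hk⟩

theorem limit (A : ℕ → ℕ → ℕ) (k : ℕ → ℕ) (hA : ∀ i, Q ty σ I (A i)) (hle : ∀ i, fle (A (i+1)) (A i))
    (hag : ∀ i, agr (k i) (A (i+1)) (A i)) (hk : StrictMono k) :
    ∃ A', Q ty σ I A' ∧ (∀ i, fle A' (A i)) ∧ ∀ i, agr (k i) A' (A i) := by
  have hki : ∀ i, i ≤ k i := fun i => hk.id_le i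
  have hle' : ∀ i j, fle (A (i + j)) (A i) := by
    intro i j
    induction j with
    | zero => exact (hA i).id
    | succ j ih => exact fle_trans (hle (i+j)) ih
  have hag' : ∀ i j, agr (k i) (A (i + j)) (A i) := by
    intro i j
    induction j with
    | zero => exact agr_refl
    | succ j ih => exact agr_trans (agr_le (hA _) (hA _) (hag (i+j)) (hk.monotone (by omega))) ih
  have hbig : ∀ i, i ≤ pr (A i) (k i) := fun i => (hki i).trans ((hA i).ge _)
  let L : ℕ → ℕ := fun x => A (x+1) x
  have hL : ∀ x i, x + 1 ≤ i → L x = A i x := by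
    intro x i hi
    obtain ⟨j, rfl⟩ := Nat.exists_eq_add_of_le hi
    exact ((hag' (x+1) j).2 x (by have := hbig (x+1); omega)).symm
  have hL' : ∀ x i, x < pr (A i) (k i) → L x = A i x := by
    intro x i hx
    rw [hL x (i + (x+1)) (by omega)]
    exact (hag' i _).2 x hx
  have hfix : ∀ i, L (pr (A i) (k i)) = pr (A i) (k i) := by
    intro i
    rw [hL _ (i + (pr (A i) (k i) + 1)) (by omega)]
    have := (hag' i (pr (A i) (k i) + 1)).1
    have h2 := (hA (i + (pr (A i) (k i) + 1))).fix (k i)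
    rwa [this] at h2
  have hinf : {x | L x = x}.Infinite := by
    rw [Set.infinite_iff_exists_gt]
    intro a
    exact ⟨_, hfix (a+1), by have := hbig (a+1); omega⟩
  have hagL : ∀ i, agr (k i) L (A i) := by
    intro i
    refine ⟨pr_transfer (hA i).inf rfl (fun x hx => (hL' x i hx).symm) (hfix i), fun x hx => hL' x i hx⟩
  have hLle : ∀ x, L x ≤ x := fun x => (hA (x+1)).le x
  refine ⟨L, ⟨hLle, fun x => ?_, hinf, fun j => ?_, fun x => (hA (x+1)).mem x⟩, fun i x => ?_, hagL⟩
  · have := hLle x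
    rw [hL (L x) (x+1) (by omega), hL x (x+1) le_rfl, (hA _).id]
  · rw [← (hA j).tp j]
    congr 1
    rcases Nat.lt_or_ge j (k j) with h1 | h1
    · have h2 : pr (A j) j < pr (A j) (k j) := (hA j).mono h1
      exact pr_transfer (hA j).inf rfl (fun x hx => (hL' x j (by omega)).symm) (by
        rw [hL' _ j h2, (hA j).fix])
    · have : k j = j := by have := hki j; omega
      have h2 := (hagL j).1
      rwa [this] at h2
  · have h1 := (hA i).le x
    rw [hL (A i x) (i + (x+1)) (by omega), hL x (i + (x+1)) (by omega)]
    exact hle' i (x+1) x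
end FW

namespace FW
variable {ty σ : ℕ → ℕ} {I : ℕ → Set ℕ} {E F G B A : ℕ → ℕ} {n m k l d : ℕ}

def Good (ty σ : ℕ → ℕ) (I : ℕ → Set ℕ) (n : ℕ) (B : ℕ → ℕ) : Prop :=
  ∀ F, Mem ty σ I n B F → ∀ k, n < k → ∃ i, i ≤ n ∧ ∀ x, F x = pr F k → ty x ∈ I (σ i)

theorem Good.mem (h : Good ty σ I n B) (hA : Mem ty σ I n B A) : Good ty σ I n A :=
  fun F hF => h F (hA.trans hF)

theorem Good.index (hB : Q ty σ I B) (h : Good ty σ I n B) (hn : n ≤ m) : Good ty σ I m B := by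
  intro F hF k hk
  obtain ⟨i, h1, h2⟩ := h F (hF.index_le hB hn) k (by omega)
  exact ⟨i, by omega, h2⟩

theorem bad_step (_hB : Q ty σ I B) (h : ¬ Good ty σ I n B) :
    ∃ A k, Mem ty σ I n B A ∧ n < k ∧ ∀ G, Mem ty σ I n A G → agr k G A := by
  classical
  have h0 : ∃ k, ∃ F, Mem ty σ I n B F ∧ n < k ∧ ∀ i, i ≤ n → ∃ x, F x = pr F k ∧ ty x ∉ I (σ i) := by
    unfold Good at h
    push Not at h
    obtain ⟨F, h1, k, h2, h3⟩ := h
    exact ⟨k, F, h1, h2, h3⟩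
  obtain ⟨A, hA, hk, hbad⟩ := Nat.find_spec h0
  refine ⟨A, Nat.find h0, hA, hk, fun G hG => ?_⟩
  obtain ⟨j, hj⟩ := hG.q.idx (pr A (Nat.find h0))
  have hcl : ∀ x, A x = pr A (Nat.find h0) → G x = pr G j := by
    intro x hx
    rw [← hG.le x, hx, hj]
  have hjn : n < j := by
    by_contra hc
    obtain ⟨x, hx, hx2⟩ := hbad j (by omega)
    apply hx2
    have := hG.q.mem x
    rwa [hcl x hx, hG.q.tp] at this
  have hkj : Nat.find h0 ≤ j := Nat.find_min' h0 ⟨G, hA.trans hG, hjn, fun i hi => by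
    obtain ⟨x, hx, hx2⟩ := hbad i hi
    exact ⟨x, hcl x hx, hx2⟩⟩
  have h1 : pr G j ≤ pr A (Nat.find h0) := by rw [hj]; exact hG.q.le _
  obtain ⟨d, hd, hd2⟩ := fle_pr' hG.q hA.q hG.le j
  rw [hd2] at h1
  have h2 := hA.q.mono.le_iff_le.1 h1
  have h3 : j = Nat.find h0 := by omega
  have h4 : d = Nat.find h0 := by omega
  rw [h3, h4] at hd2
  exact agr_of_pr hG.q hA.q hG.le hd2

theorem red (hB : Q ty σ I B) (n : ℕ) : ∃ A, Mem ty σ I n B A ∧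
    ((∀ F, Mem ty σ I n A F → F = A) ∨
      ∃ n', n ≤ n' ∧ Good ty σ I n' A ∧ ∀ F, Mem ty σ I n A F → agr n' F A) := by
  classical
  by_contra hcon
  push Not at hcon
  let St := {q : ℕ × (ℕ → ℕ) // n ≤ q.1 ∧ Mem ty σ I n B q.2 ∧ ∀ F, Mem ty σ I n q.2 F → agr q.1 F q.2}
  have step : ∀ q : St, ∃ q' : St, q.1.1 < q'.1.1 ∧ fle q'.1.2 q.1.2 ∧ agr q.1.1 q'.1.2 q.1.2 := by
    rintro ⟨⟨m, A⟩, h1, h2, h3⟩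
    have hng : ¬ Good ty σ I m A := by
      intro hg
      obtain ⟨F, hF, hF2⟩ := (hcon A h2).2 m h1 hg
      exact hF2 (h3 F hF)
    obtain ⟨A', k, hA', hk, hG⟩ := bad_step h2.q hng
    have hnA : Mem ty σ I n A A' := hA'.index_le h2.q h1
    have hk : m < k := hk
    have h1 : n ≤ m := h1
    refine ⟨⟨⟨k, A'⟩, ?_, h2.trans hnA, fun F hF => hG F ⟨hF.q, hF.le, ?_⟩⟩, hk, hA'.le, hA'.ag⟩
    · show n ≤ k
      omega
    · exact agr_trans (h3 F (hnA.trans hF)) (agr_symm hA'.ag)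
  choose nx hx1 hx2 hx3 using step
  let sq : ℕ → St := fun i => Nat.rec ⟨(n, B), le_rfl, Mem.refl hB, fun F hF => hF.ag⟩ (fun _ q => nx q) i
  obtain ⟨A, hA, hAle, hAag⟩ := limit (fun i => (sq i).1.2) (fun i => (sq i).1.1) (fun i => (sq i).2.2.1.q)
    (fun i => hx2 (sq i)) (fun i => hx3 (sq i)) (strictMono_nat_of_lt_succ fun i => hx1 (sq i))
  have hm : ∀ i, i ≤ (sq i).1.1 := (strictMono_nat_of_lt_succ fun i => hx1 (sq i)).id_le
  obtain ⟨F, hF, hF2⟩ := (hcon A ⟨hA, hAle 0, hAag 0⟩).1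
  apply hF2
  funext x
  let q := sq (x+1)
  have h1 : agr q.1.1 A q.1.2 := hAag (x+1)
  have h2 : agr q.1.1 F q.1.2 := q.2.2.2 F ⟨hF.q, fle_trans hF.le (hAle (x+1)),
    agr_trans hF.ag (agr_le hA q.2.2.1.q h1 q.2.1)⟩
  refine (agr_trans h2 (agr_symm h1)).2 x ?_
  have h3 := hm (x+1)
  have h4 := hA.ge q.1.1
  have h5 : x + 1 ≤ q.1.1 := h3
  omega

theorem exists_chain (hσ : ∀ m N, ∃ k, N ≤ k ∧ σ k = m) (a b : ℕ) (hab : σ a = σ b) :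
    ∃ c : ℕ → ℕ, StrictMono c ∧ c 0 = a ∧ ∀ i, σ (c i) = σ (b + i) := by
  choose f hf1 hf2 using hσ
  let c : ℕ → ℕ := fun i => Nat.rec a (fun i x => f (σ (b + (i + 1))) (x + 1)) i
  refine ⟨c, strictMono_nat_of_lt_succ fun i => hf1 (σ (b + (i + 1))) (c i + 1), rfl, fun i => ?_⟩
  cases i with
  | zero => exact hab
  | succ i => exact hf2 _ _

theorem amalg (hσ : ∀ m N, ∃ k, N ≤ k ∧ σ k = m) (hB : Q ty σ I B) (hg : Good ty σ I n B)
    (hA : Mem ty σ I n B A) (hl : n ≤ l) (hd : pr A l = pr B d) :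
    ∃ A', Mem ty σ I d B A' ∧ ∀ F, Q ty σ I F → fle F A' → agr l F A → fle F A := by
  classical
  have hA' := hA.q
  obtain ⟨c, hc1, hc2, hc3⟩ := exists_chain hσ l d (by rw [← hA'.tp, ← hB.tp, hd])
  have : ∀ k, ∃ i, n < k → (i ≤ n ∧ ∀ x, A x = pr A k → ty x ∈ I (σ i)) := by
    intro k
    by_cases hk : n < k
    · obtain ⟨i, h1⟩ := hg A hA k hk; exact ⟨i, fun _ => h1⟩
    · exact ⟨0, fun h => absurd h hk⟩
  choose f hf using this
  choose ix hix using hA'.idx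
  let θ : ℕ → ℕ := fun k => if k ∈ Set.range c then k else f k
  have hθle : ∀ k, l ≤ k → θ k ≤ k ∧ (θ k < l ∨ θ k ∈ Set.range c) := by
    intro k hk
    simp only [θ]
    split_ifs with h1
    · exact ⟨le_rfl, Or.inr h1⟩
    · have h2 : l ≠ k := fun e => h1 ⟨0, by rw [hc2, e]⟩
      have h3 := (hf k (by omega)).1
      refine ⟨by omega, ?_⟩
      rcases Nat.lt_or_ge (f k) l with h4 | h4
      · exact Or.inl h4
      · exact Or.inr ⟨0, by rw [hc2]; omega⟩
  have hixfix : ∀ x, A (pr A (ix x)) = pr A (ix x) := fun x => hA'.fix _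
  have hixpr : ∀ k, ix (pr A k) = k := fun k => hA'.mono.injective (by rw [hix, hA'.fix])
  have hixA : ∀ x, ix (A x) = ix x := fun x => by conv_lhs => rw [← hix x, hixpr]
  have hcN : ∀ i, pr B d ≤ pr A (c i) := fun i => by
    rw [← hd]; exact hA'.mono.monotone (by rw [← hc2]; exact hc1.monotone (Nat.zero_le _))
  have hBfix : ∀ k, B (pr A k) = pr A k := fun k => fle_fix hA' hB hA.le (hA'.fix k)
  have hixl : ∀ x, ¬ A x < pr B d → l ≤ ix x := by
    intro x hx
    rw [← hd, ← hix] at hx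
    exact hA'.mono.le_iff_le.1 (by omega)
  let R : ℕ → ℕ := fun x => if B x < pr B d then B x else if A x < pr B d then A x else pr A (θ (ix x))
  have R1 : ∀ x, B x < pr B d → R x = B x := fun x h => if_pos h
  have R2 : ∀ x, ¬ B x < pr B d → A x < pr B d → R x = A x := fun x h h' => by
    simp only [R]; rw [if_neg h, if_pos h']
  have R3 : ∀ x, ¬ B x < pr B d → ¬ A x < pr B d → R x = pr A (θ (ix x)) := fun x h h' => by
    simp only [R]; rw [if_neg h, if_neg h']
  have Rfix1 : ∀ y, B y = y → y < pr B d → R y = y := fun y h h' => by rw [R1 y (by rwa [h]), h]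
  have Rfix2 : ∀ i, R (pr A (c i)) = pr A (c i) := by
    intro i
    have := hcN i
    rw [R3 _ (by rw [hBfix]; omega) (by rw [hA'.fix]; omega), hixpr]
    congr 1
    exact if_pos ⟨i, rfl⟩
  have Rform : ∀ x, (B (R x) = R x ∧ R x < pr B d) ∨ ∃ i, R x = pr A (c i) := by
    intro x
    by_cases h1 : B x < pr B d
    · rw [R1 x h1]; exact Or.inl ⟨hB.id x, h1⟩
    by_cases h2 : A x < pr B d
    · rw [R2 x h1 h2]; refine Or.inl ⟨?_, h2⟩
      rw [← hix, hBfix]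
    rw [R3 x h1 h2]
    rcases (hθle _ (hixl x h2)).2 with h3 | ⟨i, h3⟩
    · exact Or.inl ⟨hBfix _, by rw [← hd]; exact hA'.mono h3⟩
    · exact Or.inr ⟨i, by rw [h3]⟩
  let z : ℕ → ℕ := fun j => if j < d then pr B j else pr A (c (j - d))
  have hz : StrictMono z := by
    refine strictMono_nat_of_lt_succ fun j => ?_
    simp only [z]
    by_cases h1 : j < d
    · rw [if_pos h1]
      by_cases h2 : j + 1 < d
      · rw [if_pos h2]; exact hB.mono (by omega)
      · rw [if_neg h2]; exact lt_of_lt_of_le (hB.mono h1) (hcN _)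
    · rw [if_neg h1, if_neg (by omega)]
      exact hA'.mono (hc1 (by omega))
  obtain ⟨hz1, hz2⟩ := pr_eq_of (E := R) hz (by
    intro x
    constructor
    · intro hx
      rcases Rform x with ⟨h1, h2⟩ | ⟨i, h1⟩
      · rw [hx] at h1 h2
        obtain ⟨j, hj⟩ := exists_pr h1
        refine ⟨j, ?_⟩
        rw [← hj] at h2
        simp only [z]; rw [if_pos (hB.mono.lt_iff_lt.1 h2), hj]
      · refine ⟨d + i, ?_⟩
        simp only [z]; rw [if_neg (by omega), ← hx, h1]; congr 2; omega
    · rintro ⟨j, rfl⟩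
      simp only [z]
      split_ifs with h1
      · exact Rfix1 _ (hB.fix j) (hB.mono h1)
      · exact Rfix2 _)
  have QR : Q ty σ I R := by
    refine ⟨fun x => ?_, fun x => ?_, hz2, fun j => ?_, fun x => ?_⟩
    · by_cases h1 : B x < pr B d
      · rw [R1 x h1]; exact hB.le x
      by_cases h2 : A x < pr B d
      · rw [R2 x h1 h2]; exact hA'.le x
      rw [R3 x h1 h2]
      have := hA'.mono.monotone (hθle _ (hixl x h2)).1
      rw [hix] at this
      exact this.trans (hA'.le x)
    · rcases Rform x with ⟨h1, h2⟩ | ⟨i, h1⟩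
      · exact Rfix1 _ h1 h2
      · rw [h1]; exact Rfix2 i
    · rw [hz1]
      simp only [z]
      split_ifs with h1
      · exact hB.tp j
      · rw [hA'.tp, hc3]; congr 1; omega
    · by_cases h1 : B x < pr B d
      · rw [R1 x h1]; exact hB.mem x
      by_cases h2 : A x < pr B d
      · rw [R2 x h1 h2]; exact hA'.mem x
      rw [R3 x h1 h2]
      simp only [θ]
      split_ifs with h3
      · rw [hix]; exact hA'.mem x
      · have h4 := hixl x h2
        have h5 : l ≠ ix x := fun e => h3 ⟨0, by rw [hc2, e]⟩
        rw [hA'.tp]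
        exact (hf (ix x) (by omega)).2 x (hix x).symm
  have hRB : fle R B := by
    intro x
    simp only [R]
    rw [hB.id, hA.le x, show ix (B x) = ix x from hA'.mono.injective (by rw [hix, hix, hA.le])]
  refine ⟨R, ⟨QR, hRB, agr_of_pr QR hB hRB ?_⟩, ?_⟩
  · rw [hz1]
    simp only [z]
    rw [if_neg (lt_irrefl _), Nat.sub_self, hc2, hd]
  · intro F hF hFR hFA x
    have hFlow : ∀ y, y < pr B d → F y = A y := fun y hy => hFA.2 y (by rw [hd]; exact hy)
    by_cases h1 : B x < pr B d
    · have h2 : F x = A x := by rw [← hFR x, R1 x h1, hFlow _ h1, hA.le x]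
      have h3 : A x < pr B d := by
        have := hA'.le (B x); rw [hA.le] at this; omega
      rw [h2, hFlow _ h3, hA'.id]
    · have h2 : R (A x) = R x := by
        have hBA : B (A x) = A x := by rw [← hix, hBfix]
        by_cases h2 : A x < pr B d
        · rw [R2 x h1 h2]; exact Rfix1 _ hBA h2
        · rw [R3 x h1 h2, R3 (A x) (by rwa [hBA]) (by rwa [hA'.id]), hixA]
      rw [← hFR (A x), h2, hFR x]
end FW

namespace FW
variable {ty σ : ℕ → ℕ} {I : ℕ → Set ℕ} {E F G B A : ℕ → ℕ} {n m k l d : ℕ}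

theorem a4 (hσ : ∀ m N, ∃ k, N ≤ k ∧ σ k = m) (hB : Q ty σ I B) (hg : Good ty σ I l B)
    (O : (ℕ → ℕ) → Prop)
    (hO : ∀ F G, Q ty σ I F → Q ty σ I G → agr (l+1) F G → O F → O G) :
    ∃ A, Mem ty σ I l B A ∧ ((∀ F, Mem ty σ I l A F → O F) ∨ ∀ F, Mem ty σ I l A F → ¬ O F) := by
  classical
  let Al : ℕ → Finset (Fin (l+1)) := fun k => if h : k ≤ l then {⟨k, by omega⟩} else
    Finset.univ.filter (fun i : Fin (l+1) => ∀ x, B x = pr B k → ty x ∈ I (σ i))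
  have hAl1 : ∀ k (h : k ≤ l), Al k = {⟨k, by omega⟩} := fun k h => dif_pos h
  have hAl2 : ∀ k, ¬ k ≤ l → Al k = Finset.univ.filter (fun i : Fin (l+1) => ∀ x, B x = pr B k → ty x ∈ I (σ i)) :=
    fun k h => dif_neg h
  have hne : ∀ k, (Al k).Nonempty := by
    intro k
    by_cases h : k ≤ l
    · rw [hAl1 k h]; exact ⟨_, Finset.mem_singleton_self _⟩
    · rw [hAl2 k h]
      obtain ⟨i, h1, h2⟩ := hg B (Mem.refl hB) k (by omega)
      exact ⟨⟨i, by omega⟩, by simpa using h2⟩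
  let h0 : ℕ → Fin (l+1) ⊕ ℕ := fun k => if h : k ≤ l then Sum.inl ⟨k, by omega⟩ else Sum.inr k
  have h01 : ∀ k (h : k ≤ l), h0 k = Sum.inl ⟨k, by omega⟩ := fun k h => dif_pos h
  have h02 : ∀ k, ¬ k ≤ l → h0 k = Sum.inr k := fun k h => dif_neg h
  have V0 : PC.Vs σ Al h0 := by
    refine ⟨fun j c e => ?_, fun j i e => ?_, fun m N => ?_⟩
    · by_cases h : j ≤ l
      · rw [h01 j h] at e; cases e; rw [hAl1 j h]; exact Finset.mem_singleton_self _
      · rw [h02 j h] at e; cases e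
    · by_cases h : j ≤ l
      · rw [h01 j h] at e; cases e
      · rw [h02 j h] at e; cases e
        exact ⟨le_rfl, h02 j h, rfl, rfl, fun k h1 h2 => by omega⟩
    · obtain ⟨k, h1, h2⟩ := hσ m (N + l + 1)
      exact ⟨k, by omega, h02 k (by omega), h2⟩
  let D : ℕ → (ℕ → Fin (l+1)) → Prop := fun d w => ∃ F, Mem ty σ I l B F ∧ pr F (l+1) = pr B d ∧
    (∀ k, k < d → F (pr B k) = pr B (w k)) ∧ O F
  have hD : PC.Loc D := by
    rintro d w w' hw ⟨F, h1, h2, h3, h4⟩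
    exact ⟨F, h1, h2, fun k hk => by rw [h3 k hk, hw k hk], h4⟩
  obtain ⟨A1, V1, L1, hdi⟩ := PC.main V0 hne hD (σ (l+1))
  choose α hα using hne
  -- thinning
  obtain ⟨c, hcm, hcs, hcσ⟩ : ∃ c : ℕ → ℕ, StrictMono c ∧ (∀ i, A1 (c i) = Sum.inr (c i)) ∧
      ∀ i, σ (c i) = σ (l + 1 + i) := by
    choose f hf1 hf2 hf3 using V1.inf
    let c : ℕ → ℕ := fun i => Nat.rec (f (σ (l+1)) 0) (fun i x => f (σ (l + 1 + (i + 1))) (x + 1)) i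
    refine ⟨c, strictMono_nat_of_lt_succ fun i => hf1 (σ (l + 1 + (i + 1))) (c i + 1), fun i => ?_,
      fun i => ?_⟩
    · cases i with
      | zero => exact hf2 _ _
      | succ i => exact hf2 _ _
    · cases i with
      | zero => exact hf3 _ _
      | succ i => exact hf3 _ _
  let A2 := PC.rs A1 (Set.range c) α
  have V2 : PC.Vs σ Al A2 := PC.rs_Vs V1 hα (fun m N => by
    obtain ⟨k, h1, h2⟩ := hσ m (N + l + 1)
    refine ⟨c (k - (l+1)), ?_, hcs _, ?_, ⟨_, rfl⟩⟩
    · have := hcm.id_le (k - (l+1)); simp at this; omega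
    · rw [hcσ, ← h2]; congr 1; omega)
  have L2 : PC.Le A2 A1 := PC.rs_Le V1 _ _
  have L20 : PC.Le A2 h0 := PC.Le.trans V1 L2 L1
  have hA2s : ∀ j i, A2 j = Sum.inr i → i ∈ Set.range c := fun j i e => ((PC.rs_start V1).1 e).2
  have hA2c : ∀ i, A2 (c i) = Sum.inr (c i) := fun i => (PC.rs_start V1).2 ⟨hcs i, i, rfl⟩
  have hA2l : ∀ k (h : k ≤ l), A2 k = Sum.inl ⟨k, by omega⟩ := fun k h => L20.1 _ _ (h01 k h)
  have hcl : ∀ i, l < c i := by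
    intro i
    by_contra hc
    have h1 := hA2c i
    rw [hA2l _ (by omega)] at h1
    cases h1
  let θ : ℕ → ℕ := fun k => match A2 k with
    | Sum.inl a => a.1
    | Sum.inr i => i
  have θl : ∀ k a, A2 k = Sum.inl a → θ k = a.1 := fun k a e => by simp only [θ, e]
  have θr : ∀ k i, A2 k = Sum.inr i → θ k = i := fun k a e => by simp only [θ, e]
  have θ0 : ∀ k, k ≤ l → θ k = k := fun k h => θl _ _ (hA2l k h)
  have θc : ∀ i, θ (c i) = c i := fun i => θr _ _ (hA2c i)
  have θle : ∀ k, θ k ≤ k := by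
    intro k
    by_cases hk : k ≤ l
    · rw [θ0 k hk]
    · cases e : A2 k with
      | inl a => rw [θl _ _ e]; have := a.2; omega
      | inr i => rw [θr _ _ e]; exact (V2.var _ _ e).1
  have θrange : ∀ k, θ k ≤ l ∨ θ k ∈ Set.range c := by
    intro k
    cases e : A2 k with
    | inl a => rw [θl _ _ e]; have := a.2; left; omega
    | inr i => rw [θr _ _ e]; exact Or.inr (hA2s _ _ e)
  have θθ : ∀ k, θ (θ k) = θ k := by
    intro k
    rcases θrange k with h1 | ⟨i, h1⟩
    · exact θ0 _ h1
    · rw [← h1]; exact θc i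
  choose ix hix using hB.idx
  have hixpr : ∀ k, ix (pr B k) = k := fun k => hB.mono.injective (by rw [hix, hB.fix])
  have hixB : ∀ x, ix (B x) = ix x := fun x => by conv_lhs => rw [← hix x, hixpr]
  let E : ℕ → ℕ := fun x => pr B (θ (ix x))
  have hEpr : ∀ k, E (pr B k) = pr B (θ k) := fun k => by simp only [E, hixpr]
  let z : ℕ → ℕ := fun j => if j ≤ l then pr B j else pr B (c (j - (l + 1)))
  have hz : StrictMono z := by
    refine strictMono_nat_of_lt_succ fun j => ?_
    simp only [z]
    by_cases h1 : j ≤ l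
    · rw [if_pos h1]
      by_cases h2 : j + 1 ≤ l
      · rw [if_pos h2]; exact hB.mono (by omega)
      · rw [if_neg h2]; have := hcl (j + 1 - (l+1)); exact hB.mono (by omega)
    · rw [if_neg h1, if_neg (by omega)]
      exact hB.mono (hcm (by omega))
  obtain ⟨hz1, hz2⟩ := pr_eq_of (E := E) hz (by
    intro x
    constructor
    · intro hx
      have hx' : pr B (θ (ix x)) = x := hx
      rcases θrange (ix x) with h1 | ⟨i, h1⟩
      · exact ⟨θ (ix x), by simp only [z]; rw [if_pos h1, hx']⟩
      · refine ⟨l + 1 + i, ?_⟩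
        simp only [z]; rw [if_neg (by omega), ← hx', ← h1]; congr 2; omega
    · rintro ⟨j, rfl⟩
      simp only [z]
      split_ifs with h1
      · rw [hEpr, θ0 _ h1]
      · rw [hEpr, θc])
  have QE : Q ty σ I E := by
    refine ⟨fun x => ?_, fun x => ?_, hz2, fun j => ?_, fun x => ?_⟩
    · have := hB.mono.monotone (θle (ix x))
      rw [hix] at this
      exact this.trans (hB.le x)
    · show E (pr B (θ (ix x))) = pr B (θ (ix x))
      rw [hEpr, θθ]
    · rw [hz1]
      simp only [z]
      split_ifs with h1
      · exact hB.tp j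
      · rw [hB.tp, hcσ]; congr 1; omega
    · have hm := hB.mem x
      rw [← hix, hB.tp] at hm
      show ty x ∈ I (ty (pr B (θ (ix x))))
      rw [hB.tp]
      by_cases hk : ix x ≤ l
      · rw [θ0 _ hk]; exact hm
      · cases e : A2 (ix x) with
        | inl a =>
          rw [θl _ _ e]
          have := V2.cst _ _ e
          rw [hAl2 _ hk] at this
          exact (Finset.mem_filter.1 this).2 x (hix x).symm
        | inr i => rw [θr _ _ e, ← (V2.var _ _ e).2.2.1]; exact hm
  have hEB : fle E B := by
    intro x
    simp only [E, hixB]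
  have ME : Mem ty σ I l B E := ⟨QE, hEB, agr_of_pr QE hB hEB (by
    rw [hz1]; simp only [z]; rw [if_pos le_rfl])⟩
  have key : ∀ F, Mem ty σ I l E F → ∃ d w, A2 d = Sum.inr d ∧ σ d = σ (l+1) ∧ PC.Wd Al A2 w ∧
      pr F (l+1) = pr B d ∧ ∀ k, k < d → F (pr B k) = pr B (w k) := by
    intro F hF
    have hFB := ME.trans hF
    have hpr : ∀ j, j ≤ l → pr F j = pr B j := fun j hj => agr_pr hF.q hB hFB.ag hj
    obtain ⟨m, hm, hm2⟩ := fle_pr' hF.q QE hF.le (l+1)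
    obtain ⟨i, hi⟩ : ∃ i, pr F (l+1) = pr B (c i) := by
      rw [hz1] at hm2
      simp only [z] at hm2
      rw [if_neg (by omega)] at hm2
      exact ⟨_, hm2⟩
    have hu : ∀ k, ∃ j : Fin (l+1), k < c i → F (pr B k) = pr B j := by
      intro k
      by_cases hk : k < c i
      · obtain ⟨j, hj⟩ := hF.q.idx (pr B k)
        have h1 : pr F j < pr F (l+1) := by
          rw [hj, hi]
          exact lt_of_le_of_lt (hF.q.le _) (hB.mono hk)
        have h2 := hF.q.mono.lt_iff_lt.1 h1
        exact ⟨⟨j, h2⟩, fun _ => by rw [← hj, hpr j (by omega)]⟩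
      · exact ⟨0, fun h => absurd h hk⟩
    choose u hu using hu
    have uinj : ∀ a b : Fin (l+1), pr B a = pr B b → a = b :=
      fun a b h => Fin.ext (hB.mono.injective h)
    have hFE : ∀ k, F (pr B k) = F (pr B (θ k)) := fun k => by rw [← hEpr, hF.le]
    have hFl : ∀ k, k ≤ l → F (pr B k) = pr B k := fun k hk => by rw [← hpr k hk, hF.q.fix]
    have wS := PC.sb_Wd V2 hα
    refine ⟨c i, PC.ov (c i) u (PC.sb A2 α), hA2c i, ?_, ?_, hi, ?_⟩
    · rw [← hB.tp, ← hi, hF.q.tp]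
    · refine ⟨fun k => ?_, fun k a e => ?_, fun k j e => ?_⟩
      · unfold PC.ov
        split_ifs with hk
        · by_cases hkl : k ≤ l
          · have := hu k hk
            rw [hFl k hkl] at this
            have h2 : u k = ⟨k, by omega⟩ := uinj _ _ this.symm
            rw [hAl1 k hkl, h2]; exact Finset.mem_singleton_self _
          · rw [hAl2 k hkl]
            refine Finset.mem_filter.2 ⟨Finset.mem_univ _, fun x hx => ?_⟩
            have h1 := hF.q.mem x
            have h2 : F x = pr B (u k) := by rw [← hFB.le x, hx, hu k hk]
            rwa [h2, hB.tp] at h1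
        · exact wS.1 k
      · unfold PC.ov
        split_ifs with hk
        · apply uinj
          rw [← hu k hk, hFE, θl _ _ e, hFl _ (by have := a.2; omega)]
        · exact wS.2.1 _ _ e
      · unfold PC.ov
        by_cases hk : k < c i
        · have hj := (V2.var _ _ e).1
          rw [if_pos hk, if_pos (by omega)]
          apply uinj
          rw [← hu k hk, ← hu j (by omega), hFE, θr _ _ e]
        · have := PC.block V2 (hA2c i) (by omega) e
          rw [if_neg hk, if_neg (by omega)]
          exact wS.2.2 _ _ e
    · intro k hk
      simp only [PC.ov, if_pos hk]; exact hu k hk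
  refine ⟨E, ME, ?_⟩
  rcases hdi with hdi | hdi
  · left
    intro F hF
    obtain ⟨d, w, h1, h2, h3, h4, h5⟩ := key F hF
    obtain ⟨F', g1, g2, g3, g4⟩ := hdi d w (PC.start_of_le V1 V2 L2 h1) h2 (h3.of_le L2)
    refine hO F' F g1.q hF.q ⟨by rw [g2, h4], fun x hx => ?_⟩ g4
    rw [h4] at hx
    have h6 : ix x < d := by
      apply hB.mono.lt_iff_lt.1
      rw [hix]; exact lt_of_le_of_lt (hB.le x) hx
    rw [← g1.le x, ← (ME.trans hF).le x, ← hix, h5 _ h6, g3 _ h6]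
  · right
    intro F hF hOF
    obtain ⟨d, w, h1, h2, h3, h4, h5⟩ := key F hF
    exact hdi d w (PC.start_of_le V1 V2 L2 h1) h2 (h3.of_le L2) ⟨F, ME.trans hF, h4, h5, hOF⟩
end FW

namespace FW
variable {ty σ : ℕ → ℕ} {I : ℕ → Set ℕ} {E F G B A : ℕ → ℕ} {n m k l d : ℕ}

/-- Conditions under which the fusion argument applies. -/
structure Fus (ty σ : ℕ → ℕ) (I : ℕ → Set ℕ) (n : ℕ) (B : ℕ → ℕ)
    (R : ℕ → (ℕ → ℕ) → (ℕ → ℕ) → Prop) : Prop where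
  inv : ∀ l G G' A, Q ty σ I G → Q ty σ I G' → agr l G G' → R l G A → R l G' A
  mono : ∀ l G A A', Q ty σ I A → Q ty σ I A' →
    (∀ F, Q ty σ I F → fle F A' → agr l F G → fle F A) → R l G A → R l G A'
  ex : ∀ l G A, n ≤ l → Mem ty σ I n B A → Mem ty σ I n A G →
    ∃ A', Q ty σ I A' ∧ fle A' A ∧ agr l A' G ∧ R l G A'

theorem fus_step (hσ : ∀ m N, ∃ k, N ≤ k ∧ σ k = m) (hg : Good ty σ I n B)
    {R : ℕ → (ℕ → ℕ) → (ℕ → ℕ) → Prop} (hR : Fus ty σ I n B R) (hA : Mem ty σ I n B A) (hd : n ≤ d) :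
    ∃ A', Mem ty σ I d A A' ∧ ∀ l G, n ≤ l → Mem ty σ I n A' G → pr G l = pr A d → R l G A' := by
  classical
  let N := pr A d
  have key : ∀ T : Finset (Fin N → Fin N), ∃ A', Mem ty σ I d A A' ∧ ∀ l G, n ≤ l →
      Mem ty σ I n A' G → pr G l = N → (∃ u ∈ T, ∀ x : Fin N, G x = u x) → R l G A' := by
    intro T
    induction T using Finset.induction_on with
    | empty =>
      refine ⟨A, Mem.refl hA.q, ?_⟩
      rintro l G _ _ _ ⟨u, hu, _⟩
      simp at hu
    | insert u T _ ih =>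
      obtain ⟨A1, hA1, h1⟩ := ih
      by_cases hex : ∃ l G, n ≤ l ∧ Mem ty σ I n A1 G ∧ pr G l = N ∧ ∀ x : Fin N, G x = u x
      · obtain ⟨l, G, hl, hG, hGN, hGu⟩ := hex
        have hA1n : Mem ty σ I n A A1 := hA1.index_le hA.q hd
        have hA1B : Mem ty σ I n B A1 := hA.trans hA1n
        obtain ⟨A2, q2, le2, ag2, R2⟩ := hR.ex l G A1 hl hA1B hG
        have hA2 : Mem ty σ I n A1 A2 := ⟨q2, le2, agr_trans (agr_le q2 hG.q ag2 hl) hG.ag⟩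
        obtain ⟨A3, hA3, h3⟩ := amalg hσ hA1.q (hg.mem hA1B) hA2 hl
          (show pr A2 l = pr A1 d by rw [ag2.1, hGN, hA1.ag.1])
        have hA3n : Mem ty σ I n A1 A3 := hA3.index_le hA1.q hd
        have R3 : R l G A3 := hR.mono l G A2 A3 q2 hA3.q
          (fun F hF hle hag => h3 F hF hle (agr_trans hag (agr_symm ag2))) R2
        refine ⟨A3, hA1.trans hA3, ?_⟩
        rintro l' G' hl' hG' hGN' ⟨v, hv, hGv⟩
        rw [Finset.mem_insert] at hv
        rcases hv with rfl | hv
        · have hlow : ∀ x, x < N → G x = G' x := by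
            intro x hx
            have a := hGu ⟨x, hx⟩
            have b := hGv ⟨x, hx⟩
            exact a.trans b.symm
          have hll : l = l' := agr_index hG.q hG'.q (hGN.trans hGN'.symm)
            (fun x hx => hlow x (by rwa [hGN'] at hx))
          subst hll
          exact hR.inv l G G' A3 hG.q hG'.q ⟨hGN.trans hGN'.symm,
            fun x hx => hlow x (by rwa [hGN'] at hx)⟩ R3
        · have := h1 l' G' hl' (hA3n.trans hG') hGN' ⟨v, hv, hGv⟩
          exact hR.mono l' G' A1 A3 hA1.q hA3.q (fun F _ hle _ => fle_trans hle hA3.le) this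
      · refine ⟨A1, hA1, ?_⟩
        rintro l' G' hl' hG' hGN' ⟨v, hv, hGv⟩
        rw [Finset.mem_insert] at hv
        rcases hv with rfl | hv
        · exact absurd ⟨l', G', hl', hG', hGN', hGv⟩ hex
        · exact h1 l' G' hl' hG' hGN' ⟨v, hv, hGv⟩
  obtain ⟨A', h1, h2⟩ := key Finset.univ
  refine ⟨A', h1, fun l G hl hG hGN => h2 l G hl hG hGN
    ⟨fun x => ⟨G x, lt_of_le_of_lt (hG.q.le _) x.2⟩, Finset.mem_univ _, fun x => rfl⟩⟩

theorem fus (hσ : ∀ m N, ∃ k, N ≤ k ∧ σ k = m) (hB : Q ty σ I B) (hg : Good ty σ I n B)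
    {R : ℕ → (ℕ → ℕ) → (ℕ → ℕ) → Prop} (hR : Fus ty σ I n B R) :
    ∃ A, Mem ty σ I n B A ∧ ∀ l G, n ≤ l → Mem ty σ I n A G → R l G A := by
  classical
  let St := {A : ℕ → ℕ // Mem ty σ I n B A}
  have step : ∀ i (A : St), ∃ A' : St, Mem ty σ I (n+i) A.1 A'.1 ∧
      ∀ l G, n ≤ l → Mem ty σ I n A'.1 G → pr G l = pr A.1 (n+i) → R l G A'.1 := by
    intro i A
    obtain ⟨A', h1, h2⟩ := fus_step (d := n+i) hσ hg hR A.2 (by omega)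
    exact ⟨⟨A', A.2.trans (h1.index_le A.2.q (by omega))⟩, h1, h2⟩
  choose f hf1 hf2 using step
  let sq : ℕ → St := fun i => Nat.rec ⟨B, Mem.refl hB⟩ (fun i A => f i A) i
  have h1 : ∀ i, Mem ty σ I (n+i) (sq i).1 (sq (i+1)).1 := fun i => hf1 i (sq i)
  have h2 : ∀ i l G, n ≤ l → Mem ty σ I n (sq (i+1)).1 G → pr G l = pr (sq i).1 (n+i) →
    R l G (sq (i+1)).1 := fun i => hf2 i (sq i)
  obtain ⟨A, hA, hAle, hAag⟩ := limit (fun i => (sq i).1) (fun i => n+i) (fun i => (sq i).2.q)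
    (fun i => (h1 i).le) (fun i => (h1 i).ag) (fun a b hab => by simpa using hab)
  refine ⟨A, ⟨hA, hAle 0, hAag 0⟩, fun l G hl hG => ?_⟩
  obtain ⟨d, hd, hd2⟩ := fle_pr' hG.q hA hG.le l
  obtain ⟨i, rfl⟩ := Nat.exists_eq_add_of_le (hl.trans hd)
  have h3 : R l G (sq (i+1)).1 := h2 i l G hl
    ⟨hG.q, fle_trans hG.le (hAle (i+1)), agr_trans hG.ag (agr_le hA (sq (i+1)).2.q (hAag (i+1)) (by omega))⟩
    (hd2.trans (hAag i).1)
  exact hR.mono l G _ A (sq (i+1)).2.q hA (fun F _ hle _ => fle_trans hle (hAle (i+1))) h3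

def Ac (ty σ : ℕ → ℕ) (I : ℕ → Set ℕ) (X : (ℕ → ℕ) → Prop) (l : ℕ) (G A : ℕ → ℕ) : Prop :=
  ∀ F, Q ty σ I F → fle F A → agr l F G → X F

def Rj (ty σ : ℕ → ℕ) (I : ℕ → Set ℕ) (X : (ℕ → ℕ) → Prop) (l : ℕ) (G A : ℕ → ℕ) : Prop :=
  ∀ A', Q ty σ I A' → fle A' A → agr l A' G → ¬ Ac ty σ I X l G A'

variable {X : (ℕ → ℕ) → Prop}

theorem Ac.inv (h : agr l G F) (a : Ac ty σ I X l G A) : Ac ty σ I X l F A :=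
  fun H h1 h2 h3 => a H h1 h2 (agr_trans h3 (agr_symm h))

theorem Rj.inv (h : agr l G F) (a : Rj ty σ I X l G A) : Rj ty σ I X l F A :=
  fun H h1 h2 h3 h4 => a H h1 h2 (agr_trans h3 (agr_symm h)) (h4.inv (agr_symm h))

theorem fw1_good (hσ : ∀ m N, ∃ k, N ≤ k ∧ σ k = m) (hB : Q ty σ I B) (hg : Good ty σ I n B)
    (hX : ∀ F, Q ty σ I F → X F → ∃ k, ∀ F', Mem ty σ I k F F' → X F') :
    ∃ A, Mem ty σ I n B A ∧ ((∀ F, Mem ty σ I n A F → X F) ∨ ∀ F, Mem ty σ I n A F → ¬ X F) := by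
  classical
  obtain ⟨A0, hA0, h0⟩ := fus (R := fun l G A => Ac ty σ I X l G A ∨ Rj ty σ I X l G A) hσ hB hg (by
    refine ⟨?_, ?_, ?_⟩
    · rintro l G G' A _ _ h (h1 | h1)
      · exact Or.inl (h1.inv h)
      · exact Or.inr (h1.inv h)
    · rintro l G A A' _ _ h (h1 | h1)
      · exact Or.inl fun F a b c => h1 F a (h F a b c) c
      · exact Or.inr fun F a b c => h1 F a (h F a b c) c
    · intro l G A hl hA hG
      by_cases hex : ∃ A', Q ty σ I A' ∧ fle A' A ∧ agr l A' G ∧ Ac ty σ I X l G A'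
      · obtain ⟨A', a, b, c, e⟩ := hex
        exact ⟨A', a, b, c, Or.inl e⟩
      · refine ⟨G, hG.q, hG.le, agr_refl, Or.inr fun F a b c e => hex ⟨F, a, fle_trans b hG.le, c, e⟩⟩)
  rcases h0 n A0 le_rfl (Mem.refl hA0.q) with hac | hrj
  · exact ⟨A0, hA0, Or.inl fun F hF => hac F hF.q hF.le hF.ag⟩
  obtain ⟨A, hA, h1⟩ := fus (R := fun l G A => Rj ty σ I X l G A0 → ∀ F, Q ty σ I F → fle F A →
      agr l F G → Rj ty σ I X (l+1) F A0) hσ hA0.q (hg.mem hA0) (by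
    refine ⟨?_, ?_, ?_⟩
    · intro l G G' A _ _ h h1 h2 F a b c
      exact h1 (h2.inv (agr_symm h)) F a b (agr_trans c (agr_symm h))
    · intro l G A A' _ _ h h1 h2 F a b c
      exact h1 h2 F a (h F a b c) c
    · intro l G A hl hA hG
      have hGB : Mem ty σ I n A0 G := hA.trans hG
      by_cases hr : Rj ty σ I X l G A0
      · obtain ⟨A', hA', hor⟩ := a4 (l := l) (B := G) hσ hG.q
          (Good.index hG.q (hg.mem (hA0.trans hGB)) hl) (fun F => Rj ty σ I X (l+1) F A0)
          (fun F F' _ _ h h1 => h1.inv h)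
        rcases hor with hor | hor
        · exact ⟨A', hA'.q, fle_trans hA'.le hG.le, hA'.ag,
            fun _ F a b c => hor F ⟨a, b, agr_trans c (agr_symm hA'.ag)⟩⟩
        · exfalso
          refine hr A' hA'.q (fle_trans hA'.le hGB.le) hA'.ag (fun F a b c => ?_)
          have hF : Mem ty σ I l A' F := ⟨a, b, agr_trans c (agr_symm hA'.ag)⟩
          have hFn : Mem ty σ I n A0 F := hGB.trans ((hA'.trans hF).index_le hG.q hl)
          rcases h0 (l+1) F (by omega) hFn with h2 | h2
          · exact h2 F a hFn.le agr_refl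
          · exact absurd h2 (hor F hF)
      · exact ⟨G, hG.q, hG.le, agr_refl, fun h => absurd h hr⟩)
  have h2 : ∀ l, n ≤ l → ∀ G, Mem ty σ I n A G → Rj ty σ I X l G A0 := by
    intro l hl
    induction l, hl using Nat.le_induction with
    | base => intro G hG; exact hrj.inv (agr_symm (hA.trans hG).ag)
    | succ l hl ih => intro G hG; exact h1 l G hl hG (ih G hG) G hG.q hG.le agr_refl
  refine ⟨A, hA0.trans hA, Or.inr fun F hF hXF => ?_⟩
  obtain ⟨k, hk⟩ := hX F hF.q hXF
  refine h2 (max n k) (le_max_left _ _) F hF F hF.q (hA.trans hF).le agr_refl (fun F' a b c => ?_)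
  exact hk F' ⟨a, b, agr_le a hF.q c (le_max_right _ _)⟩

theorem fw1 (hσ : ∀ m N, ∃ k, N ≤ k ∧ σ k = m) (hB : Q ty σ I B) (n : ℕ)
    (hX : ∀ F, Q ty σ I F → X F → ∃ k, ∀ F', Mem ty σ I k F F' → X F') :
    ∃ A, Mem ty σ I n B A ∧ ((∀ F, Mem ty σ I n A F → X F) ∨ ∀ F, Mem ty σ I n A F → ¬ X F) := by
  obtain ⟨A, hA, h | ⟨n', hn, hg, hag⟩⟩ := red hB n
  · refine ⟨A, hA, ?_⟩
    by_cases hXA : X A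
    · exact Or.inl fun F hF => by rw [h F hF]; exact hXA
    · exact Or.inr fun F hF => by rw [h F hF]; exact hXA
  · obtain ⟨A2, hA2, hor⟩ := fw1_good hσ hA.q hg hX
    have hA2n := hA2.index_le hA.q hn
    have key : ∀ F, Mem ty σ I n A2 F → Mem ty σ I n' A2 F := fun F hF =>
      ⟨hF.q, hF.le, agr_trans (hag F (hA2n.trans hF)) (agr_symm hA2.ag)⟩
    refine ⟨A2, hA.trans hA2n, ?_⟩
    rcases hor with hor | hor
    · exact Or.inl fun F hF => hor F (key F hF)
    · exact Or.inr fun F hF => hor F (key F hF)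

variable {Y : ℕ → (ℕ → ℕ) → Prop}

theorem fw2 (hσ : ∀ m N, ∃ k, N ≤ k ∧ σ k = m)
    (hY : ∀ j n B, Q ty σ I B → ∃ A, Mem ty σ I n B A ∧ ∀ F, Mem ty σ I n A F → ¬ Y j F)
    (n : ℕ) (hB : Q ty σ I B) :
    ∃ A, Mem ty σ I n B A ∧ ∀ F, Mem ty σ I n A F → ∀ j, ¬ Y j F := by
  obtain ⟨A, hA, h | ⟨n', hn, hg, hag⟩⟩ := red hB n
  · refine ⟨A, hA, fun F hF j => ?_⟩
    obtain ⟨A', hA', h2⟩ := hY j n A hA.q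
    have h3 := h2 A' (Mem.refl hA'.q)
    rw [h F hF]
    rwa [h A' hA'] at h3
  · obtain ⟨A2, hA2, hor⟩ := fus (R := fun l G A => ∀ F, Q ty σ I F → fle F A →
      agr l F G → ∀ j, j ≤ l → ¬ Y j F) hσ hA.q hg (by
        refine ⟨?_, ?_, ?_⟩
        · intro l G G' A _ _ h h1 F a b c
          exact h1 F a b (agr_trans c (agr_symm h))
        · intro l G A A' _ _ h h1 F a b c
          exact h1 F a (h F a b c) c
        · intro l G A hl hA hG
          have : ∀ m, ∃ A', Mem ty σ I l G A' ∧ ∀ F, Mem ty σ I l A' F → ∀ j, j < m → ¬ Y j F := by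
            intro m
            induction m with
            | zero => exact ⟨G, Mem.refl hG.q, fun F _ j hj => by omega⟩
            | succ m ih =>
              obtain ⟨A1, h1, h2⟩ := ih
              obtain ⟨A3, h3, h4⟩ := hY m l A1 h1.q
              refine ⟨A3, h1.trans h3, fun F hF j hj => ?_⟩
              rcases Nat.lt_or_ge j m with h5 | h5
              · exact h2 F (h3.trans hF) j h5
              · have : j = m := by omega
                rw [this]; exact h4 F hF
          obtain ⟨A', h1, h2⟩ := this (l+1)
          exact ⟨A', h1.q, fle_trans h1.le hG.le, h1.ag,
            fun F a b c j hj => h2 F ⟨a, b, agr_trans c (agr_symm h1.ag)⟩ j (by omega)⟩)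
    have hA2n := hA2.index_le hA.q hn
    have key : ∀ F, Mem ty σ I n A2 F → Mem ty σ I n' A2 F := fun F hF =>
      ⟨hF.q, hF.le, agr_trans (hag F (hA2n.trans hF)) (agr_symm hA2.ag)⟩
    refine ⟨A2, hA.trans hA2n, fun F hF j => ?_⟩
    exact hor (max n' j) F (le_max_left _ _) (key F hF) F hF.q hF.le agr_refl j (le_max_right _ _)
end FW

namespace AB

/-- Abstract Ellentuck-type theorem. -/
theorem ellentuck {T : Type} [t : TopologicalSpace T] (M : ℕ → T → T → Prop)
    (hr : ∀ n A, M n A A) (htr : ∀ n A B C, M n A B → M n B C → M n A C)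
    (hop : ∀ O : Set T, IsOpen O ↔ ∀ F ∈ O, ∃ k, ∀ F', M k F F' → F' ∈ O)
    (f1 : ∀ (O : Set T), IsOpen O → ∀ n B, ∃ A, M n B A ∧
      ((∀ F, M n A F → F ∈ O) ∨ ∀ F, M n A F → F ∉ O))
    (f2 : ∀ Y : ℕ → Set T, (∀ j n B, ∃ A, M n B A ∧ ∀ F, M n A F → F ∉ Y j) →
      ∀ n B, ∃ A, M n B A ∧ ∀ F, M n A F → ∀ j, F ∉ Y j) (X : Set T) :
    ((∃ O N : Set T, IsOpen O ∧ IsMeagre N ∧ X = (O \ N) ∪ (N \ O)) ↔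
      ∀ n B, ∃ A, M n B A ∧ ((∀ F, M n A F → F ∈ X) ∨ ∀ F, M n A F → F ∉ X)) ∧
    (IsMeagre X ↔ ∀ n B, ∃ A, M n B A ∧ ∀ F, M n A F → F ∉ X) := by
  have opn : ∀ n A, IsOpen {F | M n A F} := fun n A =>
    (hop _).2 fun F hF => ⟨n, fun F' hF' => htr _ _ _ _ hF hF'⟩
  have nul : ∀ X : Set T, (∀ n B, ∃ A, M n B A ∧ ∀ F, M n A F → F ∉ X) → IsMeagre X := by
    intro X h
    have : IsNowhereDense X := by
      refine Set.eq_empty_iff_forall_notMem.2 fun F hF => ?_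
      obtain ⟨n, hn⟩ := (hop _).1 isOpen_interior F hF
      obtain ⟨A, hA, hAX⟩ := h n F
      have h1 := interior_subset (hn A hA)
      obtain ⟨G, hG, hGX⟩ := mem_closure_iff.1 h1 _ (opn n A) (hr n A)
      exact hAX G hG hGX
    exact this.isMeagre
  have cnd : ∀ C : Set T, IsNowhereDense C → ∀ n B, ∃ A, M n B A ∧ ∀ F, M n A F → F ∉ C := by
    intro C hC n B
    obtain ⟨A, hA, h | h⟩ := f1 (closure C)ᶜ isClosed_closure.isOpen_compl n B
    · exact ⟨A, hA, fun F hF hFC => h F hF (subset_closure hFC)⟩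
    · exfalso
      have h1 : {F | M n A F} ⊆ closure C := fun F hF => by
        have := h F hF
        simpa using this
      have h2 : A ∈ interior (closure C) := interior_maximal h1 (opn n A) (hr n A)
      have h3 : interior (closure C) = ∅ := hC
      rw [h3] at h2
      exact h2
  have mgr : ∀ X : Set T, IsMeagre X → ∀ n B, ∃ A, M n B A ∧ ∀ F, M n A F → F ∉ X := by
    intro X hX
    obtain ⟨𝒮, h1, h2, h3⟩ := isMeagre_iff_countable_union_isNowhereDense.1 hX
    rcases 𝒮.eq_empty_or_nonempty with h0 | h0
    · subst h0
      intro n B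
      refine ⟨B, hr n B, fun F _ hF => ?_⟩
      have := h3 hF
      simp at this
    · obtain ⟨Y, rfl⟩ := h2.exists_eq_range h0
      intro n B
      obtain ⟨A, hA, h⟩ := f2 Y (fun j => cnd _ (h1 _ ⟨j, rfl⟩)) n B
      refine ⟨A, hA, fun F hF hFX => ?_⟩
      obtain ⟨_, ⟨j, rfl⟩, hj⟩ := h3 hFX
      exact h F hF j hj
  refine ⟨⟨?_, ?_⟩, mgr X, nul X⟩
  · rintro ⟨O, N, hO, hN, rfl⟩ n B
    obtain ⟨A, hA, h⟩ := mgr N hN n B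
    obtain ⟨C, hC, h' | h'⟩ := f1 O hO n A
    · refine ⟨C, htr _ _ _ _ hA hC, Or.inl fun F hF => Or.inl ⟨h' F hF, h F (htr _ _ _ _ hC hF)⟩⟩
    · refine ⟨C, htr _ _ _ _ hA hC, Or.inr fun F hF => ?_⟩
      rintro (⟨a, b⟩ | ⟨a, b⟩)
      · exact h' F hF a
      · exact h F (htr _ _ _ _ hC hF) a
  · intro h
    refine ⟨interior X, X \ interior X, isOpen_interior, nul _ ?_, ?_⟩
    · intro n B
      obtain ⟨A, hA, h' | h'⟩ := h n B
      · refine ⟨A, hA, fun F hF hFX => hFX.2 ?_⟩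
        exact interior_maximal (show {F | M n A F} ⊆ X from h') (opn n A) hF
      · exact ⟨A, hA, fun F hF hFX => h' F hF hFX.1⟩
    · ext F
      have := @interior_subset _ t X F
      simp only [mem_union, mem_sdiff]
      tauto

noncomputable def mr (E : Setoid ℕ) (x : ℕ) : ℕ := sInf {y | E.r x y}

variable {E F : Setoid ℕ} {x y n m : ℕ}

theorem mr_rel (E : Setoid ℕ) (x : ℕ) : E.r x (mr E x) :=
  Nat.sInf_mem (s := {y | E.r x y}) ⟨x, E.refl x⟩

theorem mr_le_of (h : E.r x y) : mr E x ≤ y := Nat.sInf_le h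

theorem mr_iff : E.r x y ↔ mr E x = mr E y := by
  constructor
  · intro h
    exact le_antisymm (mr_le_of (E.trans h (mr_rel E y))) (mr_le_of (E.trans (E.symm h) (mr_rel E x)))
  · intro h
    have := mr_rel E x
    rw [h] at this
    exact E.trans this (E.symm (mr_rel E y))

theorem mr_idem : mr E (mr E x) = mr E x := (mr_iff.1 (mr_rel E x)).symm

theorem minReps_iff : x ∈ minReps E ↔ mr E x = x := by
  constructor
  · intro h
    exact le_antisymm (mr_le_of (E.refl x)) (h _ (mr_rel E x))
  · intro h m hm
    rw [← h]; exact mr_le_of hm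

theorem pRep_eq : pRep E = FW.pr (mr E) := by
  funext k
  unfold pRep FW.pr
  congr 1
  funext x
  exact propext minReps_iff

theorem coarsens_iff : Coarsens F E ↔ FW.fle (mr F) (mr E) := by
  constructor
  · intro h x
    exact (mr_iff.1 (h _ _ (mr_rel E x))).symm
  · intro h a b hab
    refine mr_iff.2 ?_
    rw [← h a, mr_iff.1 hab, h b]

theorem approx_iff : approx n E = approx m F ↔ FW.pr (mr E) n = FW.pr (mr F) m ∧
    ∀ x, x < FW.pr (mr F) m → mr E x = mr F x := by
  unfold approx
  rw [pRep_eq, pRep_eq]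
  constructor
  · intro h
    have h0 : ∀ a b, (a < FW.pr (mr E) n ∧ b < FW.pr (mr E) n ∧ E.r a b) ↔
        (a < FW.pr (mr F) m ∧ b < FW.pr (mr F) m ∧ F.r a b) := fun a b => by
      have := Set.ext_iff.1 h (a, b)
      exact this
    have h1 : ∀ a, a < FW.pr (mr E) n ↔ a < FW.pr (mr F) m := fun a =>
      ⟨fun h => ((h0 a a).1 ⟨h, h, E.refl a⟩).1, fun h => ((h0 a a).2 ⟨h, h, F.refl a⟩).1⟩
    have h2 : FW.pr (mr E) n = FW.pr (mr F) m := by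
      have a := h1 (FW.pr (mr E) n)
      have b := h1 (FW.pr (mr F) m)
      omega
    refine ⟨h2, fun x hx => le_antisymm ?_ ?_⟩
    · have := mr_le_of (F.refl x)
      exact mr_le_of ((h0 x (mr F x)).2 ⟨hx, by omega, mr_rel F x⟩).2.2
    · have := mr_le_of (E.refl x)
      exact mr_le_of ((h0 x (mr E x)).1 ⟨by omega, by omega, mr_rel E x⟩).2.2
  · rintro ⟨h1, h2⟩
    ext ⟨a, b⟩
    simp only [Set.mem_ofPred_eq, h1]
    constructor
    · rintro ⟨ha, hb, h⟩
      refine ⟨ha, hb, mr_iff.2 ?_⟩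
      rw [← h2 a ha, ← h2 b hb]; exact mr_iff.1 h
    · rintro ⟨ha, hb, h⟩
      refine ⟨ha, hb, mr_iff.2 ?_⟩
      rw [h2 a ha, h2 b hb]; exact mr_iff.1 h

theorem classes_inf : (classes E).Infinite ↔ {x | mr E x = x}.Infinite := by
  have h : classes E = (fun x => {y | E.r x y}) '' {x | mr E x = x} := by
    ext C
    constructor
    · rintro ⟨x, rfl⟩
      refine ⟨mr E x, mr_idem, ?_⟩
      ext y
      exact ⟨fun h => E.trans (mr_rel E x) h, fun h => E.trans (E.symm (mr_rel E x)) h⟩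
    · rintro ⟨x, _, rfl⟩
      exact ⟨x, rfl⟩
  rw [h]
  refine Set.infinite_image_iff ?_
  intro x hx y hy hxy
  have h1 : y ∈ {z | E.r x z} := by
    have h2 : {z | E.r x z} = {z | E.r y z} := hxy
    rw [h2]; exact E.refl y
  have h3 := mr_iff.1 h1
  rw [← (show mr E x = x from hx), ← (show mr E y = y from hy)]
  exact h3

theorem ker_mr {e : ℕ → ℕ} (h1 : ∀ x, e x ≤ x) (h2 : ∀ x, e (e x) = e x) :
    mr (Setoid.ker e) = e := by
  funext x
  refine le_antisymm (mr_le_of ?_) ?_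
  · exact (h2 x).symm
  · have : e x = e (mr (Setoid.ker e) x) := mr_rel (Setoid.ker e) x
    rw [this]; exact h1 _

section
variable {P : ℕ → Set ℕ} {I : ℕ → Set ℕ} {ty : ℕ → ℕ}

theorem mem_iff (hty : ∀ x n, x ∈ P n ↔ ty x = n) :
    E ∈ EPaltI P I ↔ FW.Q ty sigmaSeq I (mr E) := by
  constructor
  · rintro ⟨⟨h1, h2⟩, h3⟩
    refine ⟨fun x => mr_le_of (E.refl x), fun x => mr_idem, classes_inf.1 h1, fun k => ?_, fun x => ?_⟩
    · rw [← pRep_eq]; exact (hty _ _).1 (h2 k)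
    · obtain ⟨m, hm, hx⟩ := h3 (mr E x) (minReps_iff.2 mr_idem) _ ((hty _ _).2 rfl) x
        (E.symm (mr_rel E x))
      rw [(hty _ _).1 hx]; exact hm
  · intro h
    refine ⟨⟨classes_inf.2 h.inf, fun k => (hty _ _).2 ?_⟩, fun x hx n hn y hy => ?_⟩
    · rw [pRep_eq]; exact h.tp k
    · refine ⟨ty y, ?_, (hty _ _).2 rfl⟩
      have := h.mem y
      rw [← mr_iff.1 hy, minReps_iff.1 hx, (hty _ _).1 hn] at this
      exact this

def MM (ty : ℕ → ℕ) (P I : ℕ → Set ℕ) (n : ℕ) (B F : ↥(EPaltI P I)) : Prop :=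
  FW.Mem ty sigmaSeq I n (mr B.1) (mr F.1)

theorem ex_of (hty : ∀ x n, x ∈ P n ↔ ty x = n) {e : ℕ → ℕ} (h : FW.Q ty sigmaSeq I e) :
    ∃ F : ↥(EPaltI P I), mr F.1 = e :=
  ⟨⟨Setoid.ker e, (mem_iff hty).2 (by rw [ker_mr h.le h.id]; exact h)⟩, ker_mr h.le h.id⟩

theorem basic_iff (hty : ∀ x n, x ∈ P n ↔ ty x = n) (n : ℕ) (G F : ↥(EPaltI P I)) :
    F ∈ basicSet (EPaltI P I) (approx n G.1) G ↔ MM ty P I n G F := by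
  have qF := (mem_iff hty).1 F.2
  have qG := (mem_iff hty).1 G.2
  constructor
  · rintro ⟨h1, m, h2⟩
    have h3 := approx_iff.1 h2
    have h4 := FW.agr_index qF qG h3.1 h3.2
    subst h4
    exact ⟨qF, coarsens_iff.1 h1, h3⟩
  · intro h
    exact ⟨coarsens_iff.2 h.le, n, approx_iff.2 h.ag⟩

theorem approx_eq {n : ℕ} {G F : ↥(EPaltI P I)} (h : MM ty P I n G F) :
    approx n F.1 = approx n G.1 := approx_iff.2 h.ag

theorem basic_sub {a : Set (ℕ × ℕ)} {G B : ↥(EPaltI P I)} (h : Coarsens G.1 B.1) :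
    basicSet (EPaltI P I) a G ⊆ basicSet (EPaltI P I) a B :=
  fun F hF => ⟨fun x y hxy => hF.1 x y (h x y hxy), hF.2⟩

theorem open_iff (hty : ∀ x n, x ∈ P n ↔ ty x = n) (O : Set ↥(EPaltI P I)) :
    (ellentuckTop (EPaltI P I)).IsOpen O ↔
      ∀ F ∈ O, ∃ k, ∀ F', MM ty P I k F F' → F' ∈ O := by
  constructor
  · intro h
    have h' : TopologicalSpace.GenerateOpen {U | ∃ a E, U = basicSet (EPaltI P I) a E} O := h
    clear h
    induction h' with
    | basic s hs =>
      obtain ⟨a, B, rfl⟩ := hs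
      rintro F ⟨h1, n, h2⟩
      refine ⟨n, fun F' hF' => ?_⟩
      refine basic_sub h1 ?_
      rw [← h2]; exact (basic_iff hty n F F').2 hF'
    | univ => exact fun F _ => ⟨0, fun _ _ => trivial⟩
    | inter s t _ _ h1 h2 =>
      rintro F ⟨a, b⟩
      obtain ⟨k, hk⟩ := h1 F a
      obtain ⟨l, hl⟩ := h2 F b
      have q := (mem_iff hty).1 F.2
      exact ⟨max k l, fun F' hF' => ⟨hk F' (FW.Mem.index_le q hF' (le_max_left _ _)),
        hl F' (FW.Mem.index_le q hF' (le_max_right _ _))⟩⟩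
    | sUnion 𝒰 _ h =>
      rintro F ⟨U, hU, hF⟩
      obtain ⟨k, hk⟩ := h U hU F hF
      exact ⟨k, fun F' hF' => ⟨U, hU, hk F' hF'⟩⟩
  · intro h
    have h0 : O = ⋃₀ {U | (∃ a E, U = basicSet (EPaltI P I) a E) ∧ U ⊆ O} := by
      ext F
      constructor
      · intro hF
        obtain ⟨k, hk⟩ := h F hF
        refine ⟨basicSet (EPaltI P I) (approx k F.1) F, ⟨⟨_, _, rfl⟩, fun F' hF' => ?_⟩, ?_⟩
        · exact hk F' ((basic_iff hty k F F').1 hF')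
        · exact (basic_iff hty k F F).2 (FW.Mem.refl ((mem_iff hty).1 F.2))
      · rintro ⟨U, ⟨_, hU⟩, hF⟩
        exact hU hF
    rw [h0]
    exact TopologicalSpace.GenerateOpen.sUnion _ fun U hU => TopologicalSpace.GenerateOpen.basic _ hU.1

theorem ramsey_iff (hty : ∀ x n, x ∈ P n ↔ ty x = n) (X : Set ↥(EPaltI P I)) :
    IsRamsey (EPaltI P I) X ↔ ∀ n B, ∃ A, MM ty P I n B A ∧
      ((∀ F, MM ty P I n A F → F ∈ X) ∨ ∀ F, MM ty P I n A F → F ∉ X) := by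
  constructor
  · intro h n B
    obtain ⟨A, hA, h1⟩ := h (approx n B.1) B
      ⟨B, (basic_iff hty n B B).2 (FW.Mem.refl ((mem_iff hty).1 B.2))⟩
    have hA' := (basic_iff hty n B A).1 hA
    rw [← approx_eq hA'] at h1
    refine ⟨A, hA', h1.imp (fun h1 F hF => h1 ((basic_iff hty n A F).2 hF)) (fun h1 F hF hX => ?_)⟩
    exact Set.eq_empty_iff_forall_notMem.1 h1 F ⟨(basic_iff hty n A F).2 hF, hX⟩
  · rintro h a B ⟨G, hG, n, rfl⟩
    obtain ⟨A, hA, h1⟩ := h n G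
    refine ⟨A, basic_sub hG ((basic_iff hty n G A).2 hA), ?_⟩
    rw [← approx_eq hA]
    refine h1.imp (fun h1 F hF => h1 F ((basic_iff hty n A F).1 hF)) (fun h1 => ?_)
    refine Set.eq_empty_iff_forall_notMem.2 fun F hF => ?_
    exact h1 F ((basic_iff hty n A F).1 hF.1) hF.2

theorem ramseyNull_iff (hty : ∀ x n, x ∈ P n ↔ ty x = n) (X : Set ↥(EPaltI P I)) :
    IsRamseyNull (EPaltI P I) X ↔ ∀ n B, ∃ A, MM ty P I n B A ∧
      ∀ F, MM ty P I n A F → F ∉ X := by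
  constructor
  · intro h n B
    obtain ⟨A, hA, h1⟩ := h (approx n B.1) B
      ⟨B, (basic_iff hty n B B).2 (FW.Mem.refl ((mem_iff hty).1 B.2))⟩
    have hA' := (basic_iff hty n B A).1 hA
    rw [← approx_eq hA'] at h1
    refine ⟨A, hA', fun F hF hX => ?_⟩
    exact Set.eq_empty_iff_forall_notMem.1 h1 F ⟨(basic_iff hty n A F).2 hF, hX⟩
  · rintro h a B ⟨G, hG, n, rfl⟩
    obtain ⟨A, hA, h1⟩ := h n G
    refine ⟨A, basic_sub hG ((basic_iff hty n G A).2 hA), ?_⟩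
    rw [← approx_eq hA]
    refine Set.eq_empty_iff_forall_notMem.2 fun F hF => ?_
    exact h1 F ((basic_iff hty n A F).1 hF.1) hF.2

theorem sigma_hits (m N : ℕ) : ∃ k, N ≤ k ∧ sigmaSeq k = m := by
  have hp : 0 < 2 ^ m := by positivity
  have h1 : 2 ^ m * (2 * N + 1) = 2 ^ m * (2 * N + 1) - 1 + 1 := by
    have : 0 < 2 ^ m * (2 * N + 1) := by positivity
    omega
  refine ⟨2 ^ m * (2 * N + 1) - 1, ?_, ?_⟩
  · have : 1 * (2 * N + 1) ≤ 2 ^ m * (2 * N + 1) := Nat.mul_le_mul_right _ hp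
    omega
  · unfold sigmaSeq
    rw [← h1, padicValNat.mul (by positivity) (by omega), padicValNat.prime_pow,
      padicValNat.eq_zero_of_not_dvd (by omega)]
    rfl

theorem final (hty : ∀ x n, x ∈ P n ↔ ty x = n) (X : Set ↥(EPaltI P I)) :
    (HasBP (EPaltI P I) X ↔ IsRamsey (EPaltI P I) X) ∧
    (@IsMeagre _ (ellentuckTop (EPaltI P I)) X ↔ IsRamseyNull (EPaltI P I) X) := by
  rw [ramsey_iff hty, ramseyNull_iff hty]
  have q : ∀ F : ↥(EPaltI P I), FW.Q ty sigmaSeq I (mr F.1) := fun F => (mem_iff hty).1 F.2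
  have inj : ∀ F G : ↥(EPaltI P I), mr F.1 = mr G.1 → F = G := by
    intro F G h
    refine Subtype.ext (Setoid.ext fun a b => ?_)
    exact (mr_iff (E := F.1)).trans (by rw [h]; exact (mr_iff (E := G.1)).symm)
  refine @ellentuck _ (ellentuckTop (EPaltI P I)) (MM ty P I) (fun n A => FW.Mem.refl (q A))
    (fun n A B C h1 h2 => FW.Mem.trans h1 h2) (open_iff hty) ?_ ?_ X
  · intro O hO n B
    have hX : ∀ e, FW.Q ty sigmaSeq I e → (∃ F ∈ O, mr F.1 = e) →
        ∃ k, ∀ F', FW.Mem ty sigmaSeq I k e F' → ∃ F ∈ O, mr F.1 = F' := by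
      rintro e he ⟨F, hF, rfl⟩
      obtain ⟨k, hk⟩ := (open_iff hty O).1 hO F hF
      refine ⟨k, fun F' hF' => ?_⟩
      obtain ⟨G, rfl⟩ := ex_of hty hF'.q
      exact ⟨G, hk G hF', rfl⟩
    obtain ⟨A, hA, h⟩ := FW.fw1 (X := fun e => ∃ F ∈ O, mr F.1 = e) sigma_hits (q B) n hX
    obtain ⟨A, rfl⟩ := ex_of hty hA.q
    refine ⟨A, hA, h.imp (fun h F hF => ?_) (fun h F hF hFO => h _ hF ⟨F, hFO, rfl⟩)⟩
    obtain ⟨G, hG, e⟩ := h _ hF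
    rw [← inj _ _ e]; exact hG
  · intro Y hY n B
    have hY' : ∀ j n B, FW.Q ty sigmaSeq I B → ∃ A, FW.Mem ty sigmaSeq I n B A ∧
        ∀ F, FW.Mem ty sigmaSeq I n A F → ¬ ∃ G ∈ Y j, mr G.1 = F := by
      intro j n B hB
      obtain ⟨B, rfl⟩ := ex_of hty hB
      obtain ⟨A, hA, h⟩ := hY j n B
      refine ⟨_, hA, ?_⟩
      rintro F hF ⟨G, hG, rfl⟩
      exact h G hF hG
    obtain ⟨A, hA, h⟩ := FW.fw2 (Y := fun j e => ∃ F ∈ Y j, mr F.1 = e) sigma_hits hY' n (q B)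
    obtain ⟨A, rfl⟩ := ex_of hty hA.q
    exact ⟨A, hA, fun F hF j hj => h _ hF j ⟨F, hj, rfl⟩⟩
end
end AB
/-- **Theorem 5.3:** `(𝓔^{P,I}_∞, ≤, r)` is a topological Ramsey space. -/
theorem EPaltIIsTopologicalRamseySpace
    (P : ℕ → Set ℕ)
    (hinf : ∀ i, (P i).Infinite)
    (hdisj : ∀ i j, i ≠ j → Disjoint (P i) (P j))
    (hcov : ⋃ i, P i = Set.univ)
    (hmin : ∀ i j : ℕ, i < j → sInf (P i) < sInf (P j))
    (I : ℕ → Set ℕ) (hI : ∀ n, n ∈ I n)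
    (X : Set ↥(EPaltI P I)) :
    (HasBP (EPaltI P I) X ↔ IsRamsey (EPaltI P I) X) ∧
    (@IsMeagre _ (ellentuckTop (EPaltI P I)) X ↔ IsRamseyNull (EPaltI P I) X) := by
  have h : ∀ x, ∃ n, x ∈ P n := fun x => by
    have : x ∈ ⋃ i, P i := by rw [hcov]; trivial
    simpa using this
  choose ty hty using h
  refine AB.final (ty := ty) (fun x n => ⟨fun hx => ?_, fun hx => hx ▸ hty x⟩) X
  by_contra hne
  exact Set.disjoint_left.1 (hdisj _ _ hne) (hty x) hx

end DualRamsey
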